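/- arXiv:1410.1669 — 12 statements merged into one kernel-verified Lean document; each statement's English description precedes it below -/
import Mathlib

section
/- For any finite simple graph G of order n with minimum degree δ, if r := ⌊s/(δ+1)⌋ + 1 satisfies r ≤ τ, then with θ = (δ+1)r − s, ρ = 1/θ and B_{s−1} = C((δ+1)r, s−1), the ⟨r,s⟩-domination number satisfies γ⟨r,s⟩(G) ≤ (1 − (rρ)^ρ / ((1+ρ)^{1+ρ} · B_{s−1}^{ρ})) · r·n. -/
open Finset Real

/-- The ⟨r,s⟩-domination number: the smallest weight of an s-dominating r-function. -/
noncomputable def rsDomNum {V : Type*} [Fintype V] [DecidableEq V]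
    (G : SimpleGraph V) [DecidableRel G.Adj] (rf sf : V → ℕ) : ℕ :=
  sInf {w : ℕ | ∃ f : V → ℕ, (∀ v, f v ≤ rf v) ∧
    (∀ v, sf v ≤ ∑ u ∈ insert v (G.neighborFinset v), f u) ∧ w = ∑ v, f v}

lemma rs_sum_ge {I : Type*} [Fintype I] [DecidableEq I] (q : ℝ) (T : Finset I) :
    ∑ S : Finset I, (q ^ S.card * (1 - q) ^ (Finset.univ \ S).card) * (if T ⊆ S then 1 else 0)
      = q ^ T.card := by
  have h := Finset.prod_add (fun _ : I => q) (fun i => if i ∈ T then 0 else 1 - q) univ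
  rw [Finset.powerset_univ] at h
  have h1 : ∏ i : I, (q + if i ∈ T then 0 else 1 - q) = q ^ T.card := by
    have : ∀ i : I, (q + if i ∈ T then 0 else 1 - q) = if i ∈ T then q else 1 := by
      intro i; split_ifs <;> ring
    simp_rw [this]
    rw [Finset.prod_ite_mem]; simp
  rw [← h1, h]
  refine Finset.sum_congr rfl fun S _ => ?_
  rw [Finset.prod_const, mul_assoc]
  congr 1
  split_ifs with hTS
  · rw [mul_one]
    rw [← Finset.prod_const]
    refine Finset.prod_congr rfl fun i hi => ?_
    rw [if_neg]
    intro hiT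
    exact (Finset.mem_sdiff.1 hi).2 (hTS hiT)
  · rw [mul_zero]
    obtain ⟨i, hiT, hiS⟩ := Finset.not_subset.1 hTS
    symm
    apply Finset.prod_eq_zero (i := i)
    · simp [hiS]
    · simp [hiT]

lemma rs_card_choose {I : Type*} [DecidableEq I] (A S : Finset I) (k : ℕ) :
    (((S ∩ A).card.choose k : ℕ) : ℝ) = ∑ T ∈ A.powersetCard k, (if T ⊆ S then (1:ℝ) else 0) := by
  rw [← Finset.card_powersetCard, Finset.sum_boole]
  congr 2
  ext T
  simp only [Finset.mem_powersetCard, Finset.mem_filter, Finset.subset_inter_iff]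
  tauto

/-- Averaging: there is a good set of unselected slots. -/
lemma rs_exists {I V : Type*} [Fintype I] [DecidableEq I] [Fintype V] (q : ℝ) (hq0 : 0 ≤ q)
    (hq1 : q ≤ 1) (A : V → Finset I) (M k : ℕ) (hA : ∀ v, (A v).card = M) :
    ∃ S : Finset I, (((Finset.univ \ S).card : ℝ)) + ∑ v, (((S ∩ A v).card.choose k : ℕ) : ℝ)
      ≤ (Fintype.card I : ℝ) * (1 - q) + (Fintype.card V : ℝ) * ((M.choose k : ℕ) * q ^ k) := by
  by_contra! hcon
  set w : Finset I → ℝ := fun S => q ^ S.card * (1 - q) ^ (Finset.univ \ S).card with hw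
  have hw0 : ∀ S, 0 ≤ w S := fun S => mul_nonneg (pow_nonneg hq0 _) (pow_nonneg (by linarith) _)
  have hw1 : ∑ S, w S = 1 := by
    have := rs_sum_ge q (∅ : Finset I)
    simpa using this
  have hT : ∀ T, ∑ S, w S * (if T ⊆ S then 1 else 0) = q ^ T.card := fun T => rs_sum_ge q T
  have hcardS : ∀ S : Finset I, ((Finset.univ \ S).card : ℝ)
      = Fintype.card I - ∑ i : I, (if {i} ⊆ S then (1:ℝ) else 0) := by
    intro S
    have h1 : ((Finset.univ \ S).card : ℝ) + S.card = Fintype.card I := by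
      rw [← Finset.compl_eq_univ_sdiff, ← Nat.cast_add, Finset.card_compl_add_card]
    have h2 : ∑ i : I, (if {i} ⊆ S then (1:ℝ) else 0) = S.card := by
      simp
    rw [h2]; linarith
  have hE : ∑ S, w S * ((((Finset.univ \ S).card : ℝ)) + ∑ v, (((S ∩ A v).card.choose k : ℕ) : ℝ))
      = (Fintype.card I : ℝ) * (1 - q) + (Fintype.card V : ℝ) * ((M.choose k : ℕ) * q ^ k) := by
    simp_rw [mul_add, Finset.sum_add_distrib, hcardS, mul_sub, Finset.sum_sub_distrib,
      rs_card_choose, Finset.mul_sum]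
    rw [← Finset.sum_mul, hw1, Finset.sum_comm]
    simp_rw [hT]
    rw [Finset.sum_comm]
    have : ∀ v, ∑ S, ∑ T ∈ (A v).powersetCard k, w S * (if T ⊆ S then (1:ℝ) else 0)
        = (M.choose k : ℕ) * q ^ k := by
      intro v
      rw [Finset.sum_comm]
      simp_rw [hT]
      rw [Finset.sum_congr rfl (g := fun _ => q ^ k)
        (fun T hT => by rw [(Finset.mem_powersetCard.1 hT).2])]
      rw [Finset.sum_const, Finset.card_powersetCard, hA, nsmul_eq_mul]
    simp_rw [this]
    simp
  obtain ⟨S0, hS0⟩ : ∃ S, 0 < w S := by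
    by_contra! h
    have : ∑ S, w S ≤ 0 := Finset.sum_nonpos fun S _ => h S
    linarith
  have : ∑ S, w S * ((Fintype.card I : ℝ) * (1 - q) +
      (Fintype.card V : ℝ) * ((M.choose k : ℕ) * q ^ k)) <
      ∑ S, w S * ((((Finset.univ \ S).card : ℝ)) + ∑ v, (((S ∩ A v).card.choose k : ℕ) : ℝ)) := by
    apply Finset.sum_lt_sum
    · intro S _
      exact mul_le_mul_of_nonneg_left (hcon S).le (hw0 S)
    · exact ⟨S0, mem_univ _, mul_lt_mul_of_pos_left (hcon S0) hS0⟩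
  rw [hE, ← Finset.sum_mul, hw1, one_mul] at this
  exact lt_irrefl _ this

lemma rs_sub_le_choose (y t : ℕ) : y - t ≤ y.choose (t + 1) := by
  induction y with
  | zero => simp
  | succ y ih =>
    rw [Nat.choose_succ_succ']
    rcases Nat.lt_or_ge y t with h | h
    · omega
    · have := Nat.choose_pos h
      omega

/-- Combinatorial core. -/
lemma rs_core {V : Type*} [Fintype V] [DecidableEq V]
    (G : SimpleGraph V) [DecidableRel G.Adj] (rf sf : V → ℕ) (s r t : ℕ)
    (hs : ∀ v, sf v ≤ s) (hr : ∀ v, r ≤ rf v) (ht : (G.minDegree + 1) * r = s + t)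
    (q : ℝ) (hq0 : 0 ≤ q) (hq1 : q ≤ 1) :
    (rsDomNum G rf sf : ℝ) ≤ (r * Fintype.card V : ℝ) * (1 - q) +
      (Fintype.card V : ℝ) * (((s + t).choose (t + 1) : ℕ) * q ^ (t + 1)) := by
  have hN : ∀ v, ∃ N ⊆ insert v (G.neighborFinset v), N.card = G.minDegree + 1 := by
    intro v
    apply Finset.exists_subset_card_eq
    rw [Finset.card_insert_of_notMem (by simp), G.card_neighborFinset_eq_degree]
    exact Nat.succ_le_succ (G.minDegree_le_degree v)
  choose N hNs hNc using hN
  obtain ⟨S, hS⟩ := rs_exists (I := V × Fin r) q hq0 hq1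
    (fun v => N v ×ˢ (univ : Finset (Fin r))) (s + t) (t + 1)
    (by intro v; simp [hNc, ht])
  have hR : ∀ v, ∃ R ⊆ S ∩ (N v ×ˢ (univ : Finset (Fin r))),
      R.card = (S ∩ (N v ×ˢ (univ : Finset (Fin r)))).card - t := fun v =>
    Finset.exists_subset_card_eq (Nat.sub_le _ _)
  choose R hRs hRc using hR
  set P : Finset (V × Fin r) := (univ \ S) ∪ univ.biUnion R with hP
  set f : V → ℕ := fun u => (P.filter (fun x => x.1 = u)).card with hf
  have hsum : ∀ X : Finset V, ∑ u ∈ X, f u = (P.filter (fun x => x.1 ∈ X)).card := by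
    intro X
    rw [Finset.card_eq_sum_card_fiberwise (f := Prod.fst) (t := X)]
    · refine Finset.sum_congr rfl fun u hu => ?_
      rw [Finset.filter_filter]
      refine congrArg Finset.card ?_
      ext x
      simp only [Finset.mem_filter]
      constructor
      · rintro ⟨h1, h2⟩; exact ⟨h1, h2 ▸ hu, h2⟩
      · rintro ⟨h1, h2, h3⟩; exact ⟨h1, h3⟩
    · intro x hx
      simpa using (Finset.mem_filter.1 hx).2
  have hw : (∑ v, f v : ℕ) ≤ (Finset.univ \ S).card +
      ∑ v, (S ∩ (N v ×ˢ (univ : Finset (Fin r)))).card.choose (t + 1) := by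
    rw [hsum]
    refine (Finset.card_filter_le _ _).trans ((Finset.card_union_le _ _).trans ?_)
    refine Nat.add_le_add_left (Finset.card_biUnion_le.trans (Finset.sum_le_sum fun v _ => ?_)) _
    rw [hRc]
    exact rs_sub_le_choose _ _
  have hmem : rsDomNum G rf sf ≤ ∑ v, f v := by
    apply Nat.sInf_le
    refine ⟨f, fun v => le_trans ?_ (hr v), fun v => (hs v).trans ?_, rfl⟩
    · have : P.filter (fun x => x.1 = v) ⊆ ({v} : Finset V) ×ˢ (univ : Finset (Fin r)) := by
        intro x hx
        rw [Finset.mem_product, Finset.mem_singleton]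
        exact ⟨(Finset.mem_filter.1 hx).2, mem_univ _⟩
      simpa using Finset.card_le_card this
    · refine le_trans ?_ (Finset.sum_le_sum_of_subset (hNs v))
      rw [hsum]
      set A := N v ×ˢ (univ : Finset (Fin r)) with hA
      have hAc : A.card = s + t := by simp [hA, hNc, ht]
      have h1 : (A \ S) ∪ R v ⊆ P.filter (fun x => x.1 ∈ N v) := by
        intro x hx
        rw [Finset.mem_filter, hP]
        rcases Finset.mem_union.1 hx with h | h
        · rw [Finset.mem_sdiff] at h
          exact ⟨Finset.mem_union_left _ (by simp [h.2]), (Finset.mem_product.1 h.1).1⟩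
        · refine ⟨Finset.mem_union_right _ (Finset.mem_biUnion.2 ⟨v, mem_univ _, h⟩), ?_⟩
          exact (Finset.mem_product.1 (Finset.mem_inter.1 (hRs v h)).2).1
      have h2 := Finset.card_le_card h1
      rw [Finset.card_union_of_disjoint, hRc] at h2
      · have h3 := Finset.card_sdiff_add_card_inter A S
        rw [Finset.inter_comm] at h3
        rw [← hA] at h2
        omega
      · rw [Finset.disjoint_left]
        intro x hx hx'
        exact (Finset.mem_sdiff.1 hx).2 (Finset.mem_inter.1 (hRs v hx')).1
  have h4 : (rsDomNum G rf sf : ℝ) ≤ ((Finset.univ \ S).card : ℝ) +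
      ∑ v, (((S ∩ (N v ×ˢ (univ : Finset (Fin r)))).card.choose (t + 1) : ℕ) : ℝ) := by
    exact_mod_cast hmem.trans hw
  refine h4.trans (hS.trans (le_of_eq ?_))
  rw [Fintype.card_prod, Fintype.card_fin]
  push_cast
  ring

theorem rs_domination_bound
    {V : Type*} [Fintype V] [DecidableEq V] [Nonempty V]
    (G : SimpleGraph V) [DecidableRel G.Adj]
    (n : ℕ) (hn : n = Fintype.card V)
    (δ : ℕ) (hδ : δ = G.minDegree)
    (rf sf : V → ℕ)
    (s : ℕ) (hs : s = Finset.univ.sup sf)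
    (r : ℕ) (hr : r = s / (δ + 1) + 1)
    (hrτ : r ≤ Finset.univ.inf' Finset.univ_nonempty rf)
    (θ : ℝ) (hθ : θ = ((δ : ℝ) + 1) * r - s)
    (ρ : ℝ) (hρ : ρ = 1 / θ)
    (B : ℝ) (hB : B = (((δ + 1) * r).choose (s - 1) : ℕ)) :
    (rsDomNum G rf sf : ℝ) ≤
      (1 - ((r : ℝ) * ρ) ^ ρ / ((1 + ρ) ^ (1 + ρ) * B ^ ρ)) * ((r : ℝ) * n) := by
  have hlt : s < (δ + 1) * r := by
    rw [hr]; exact Nat.lt_mul_div_succ s (Nat.succ_pos δ)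
  obtain ⟨t, ht⟩ := Nat.exists_eq_add_of_lt hlt
  set m := t + 1 with hm
  have ht' : (δ + 1) * r = s + m := ht
  have hθm : θ = m := by
    have : (((δ + 1) * r : ℕ) : ℝ) = ((s + m : ℕ) : ℝ) := by rw [ht']
    push_cast at this
    rw [hθ, this]; push_cast; ring
  have hmpos : (0:ℝ) < m := by rw [hm]; positivity
  have hrpos : 0 < r := by rw [hr]; exact Nat.succ_pos _
  have hrpos' : (0:ℝ) < r := by exact_mod_cast hrpos
  rw [ht'] at hB
  have hBpos : 0 < B := by
    rw [hB]; exact_mod_cast Nat.choose_pos (by omega)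
  -- comparison of binomials
  have hBC : (((s + m).choose (m + 1) : ℕ) : ℝ) ≤ B := by
    rw [hB]
    rcases Nat.eq_zero_or_pos s with h0 | h0
    · subst h0
      simp
    · rw [← Nat.choose_symm_of_eq_add (show s + m = (m + 1) + (s - 1) by omega)]
  have hrB : (r : ℝ) ≤ B * (m + 1) := by
    rcases Nat.eq_zero_or_pos s with h0 | h0
    · have hr1 : r = 1 := by rw [hr, h0]; simp
      have hB1 : B = 1 := by rw [hB, h0]; simp
      rw [hr1, hB1]; push_cast; linarith
    · have h1 : (s + m).choose (s - 1) = (s + m).choose (m + 1) :=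
        Nat.choose_symm_of_eq_add (by omega)
      obtain ⟨a, ha⟩ : ∃ a, s + m = a + 1 := ⟨s + m - 1, by omega⟩
      have h2 := Nat.add_one_mul_choose_eq a m
      have h3 : 0 < a.choose m := Nat.choose_pos (by omega)
      have h4 : r ≤ (s + m).choose (s - 1) * (m + 1) := by
        rw [h1, ha, ← h2, ← ha, ← ht']
        calc r ≤ (δ + 1) * r := Nat.le_mul_of_pos_left _ (Nat.succ_pos _)
          _ ≤ _ := Nat.le_mul_of_pos_right _ h3
      rw [hB]; exact_mod_cast h4
  have hρpos : 0 < ρ := by rw [hρ, hθm]; positivity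
  set x : ℝ := r / (B * (m + 1)) with hx
  have hx0 : 0 < x := by rw [hx]; positivity
  have hx1 : x ≤ 1 := by rw [hx]; exact (div_le_one (by positivity)).2 hrB
  set q : ℝ := x ^ ρ with hq
  have hq0 : 0 ≤ q := (Real.rpow_pos_of_pos hx0 _).le
  have hq1 : q ≤ 1 := Real.rpow_le_one hx0.le hx1 hρpos.le
  have hqm : q ^ m = x := by
    rw [hq, ← Real.rpow_natCast, ← Real.rpow_mul hx0.le, hρ, hθm,
      one_div_mul_cancel hmpos.ne', Real.rpow_one]
  have hcore := rs_core G rf sf s r m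
    (fun v => hs ▸ Finset.le_sup (f := sf) (mem_univ v))
    (fun v => hrτ.trans (Finset.inf'_le _ (mem_univ v))) (hδ ▸ ht') q hq0 hq1
  rw [← hn] at hcore
  have hfrac : ((r : ℝ) * ρ) ^ ρ / ((1 + ρ) ^ (1 + ρ) * B ^ ρ) = q / (1 + ρ) := by
    have hxe : x = (r * ρ) / ((1 + ρ) * B) := by
      rw [hx, hρ, hθm]; field_simp
      try ring
    rw [hq, hxe, Real.div_rpow (by positivity) (by positivity),
      Real.mul_rpow (x := 1 + ρ) (by positivity) hBpos.le,
      Real.rpow_add (by positivity), Real.rpow_one]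
    have : 0 < (1 + ρ) ^ ρ := Real.rpow_pos_of_pos (by positivity) _
    have : 0 < B ^ ρ := Real.rpow_pos_of_pos hBpos _
    field_simp
  rw [hfrac]
  refine hcore.trans ?_
  have h5 : (n : ℝ) * (((s + m).choose (m + 1) : ℕ) * q ^ (m + 1)) ≤ n * (B * q ^ (m + 1)) := by
    gcongr
  refine (add_le_add_right h5 _).trans (le_of_eq ?_)
  rw [pow_succ, hqm, hx, hρ, hθm]
  field_simp
  ring
end

section
/- For any finite simple graph G of order n with minimum degree δ, if r := ⌊s/(δ+1)⌋ + 1 satisfies r ≤ τ, then with θ = (δ+1)r − s and B_{s−1} = C((δ+1)r, s−1), the ⟨r,s⟩-domination number satisfies γ⟨r,s⟩(G) ≤ ((ln(θ+1) + ln B_{s−1} − ln r + 1)/(θ+1)) · r·n. -/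
open Finset Real

lemma aux_choose (j d : ℕ) : d ≤ (j + d).choose (j + 1) := by
  induction d with
  | zero => simp
  | succ d ih =>
    have h : (j + (d + 1)).choose (j + 1) = (j + d).choose j + (j + d).choose (j + 1) := by
      rw [← Nat.choose_succ_succ]; rfl
    have h2 : 0 < (j + d).choose j := Nat.choose_pos (by omega)
    omega

/-- probability that a random set avoids `D` -/
lemma aux_avoid {α : Type*} [Fintype α] [DecidableEq α] (p : ℝ) (D : Finset α) :
    ∑ A : Finset α, p ^ A.card * (1 - p) ^ (Fintype.card α - A.card) *
      (if Disjoint D A then (1 : ℝ) else 0) = (1 - p) ^ D.card := by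
  have h1 : ∑ A : Finset α, p ^ A.card * (1 - p) ^ (Fintype.card α - A.card) *
      (if Disjoint D A then (1 : ℝ) else 0) =
      ∑ A ∈ (Dᶜ).powerset, p ^ A.card * (1 - p) ^ (Fintype.card α - A.card) := by
    simp only [mul_ite, mul_one, mul_zero]
    rw [← Finset.sum_filter]
    apply Finset.sum_congr _ (fun _ _ => rfl)
    ext A
    simp only [mem_filter, mem_univ, true_and, mem_powerset]
    rw [disjoint_comm, ← Finset.subset_compl_iff_disjoint_right]
  have h2 := Finset.sum_pow_mul_eq_add_pow p (1 - p) (Dᶜ)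
  rw [h1]
  calc _ = ∑ A ∈ (Dᶜ).powerset, (p ^ A.card * (1 - p) ^ ((Dᶜ).card - A.card)) * (1 - p) ^ D.card := by
        apply Finset.sum_congr rfl
        intro A hA
        have h3 := Finset.card_le_card (Finset.mem_powerset.1 hA)
        have h4 := Finset.card_add_card_compl D
        rw [mul_assoc, ← pow_add]
        congr 2
        omega
    _ = _ := by
        rw [← Finset.sum_mul, h2]; simp

lemma aux_exists {α ι : Type*} [Fintype α] [DecidableEq α] (p : ℝ) (hp0 : 0 ≤ p) (hp1 : p ≤ 1)
    (I : Finset ι) (D : ι → Finset α) :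
    ∃ A : Finset α, (A.card : ℝ) + ∑ i ∈ I, (if Disjoint (D i) A then (1 : ℝ) else 0) ≤
      p * Fintype.card α + ∑ i ∈ I, (1 - p) ^ (D i).card := by
  by_contra hcon
  push Not at hcon
  set W : Finset α → ℝ := fun A => p ^ A.card * (1 - p) ^ (Fintype.card α - A.card) with hW
  have hW0 : ∀ A, 0 ≤ W A := fun A => by
    have : 0 ≤ 1 - p := by linarith
    simp only [hW]; positivity
  have hW1 : ∑ A, W A = 1 := by
    have := aux_avoid p (∅ : Finset α)
    simpa using this
  have hav : ∀ S : Finset α, ∑ A, W A * (if Disjoint S A then (1 : ℝ) else 0) = (1 - p) ^ S.card :=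
    fun S => aux_avoid p S
  have hcard : ∀ A : Finset α, (A.card : ℝ) =
      ∑ x : α, (1 - (if Disjoint {x} A then (1 : ℝ) else 0)) := by
    intro A
    have : ∀ x : α, (1 - (if Disjoint {x} A then (1 : ℝ) else 0)) = if x ∈ A then 1 else 0 := by
      intro x
      by_cases h : x ∈ A <;> simp [h]
    rw [Finset.sum_congr rfl (fun x _ => this x)]
    simp
  have hE1 : ∑ A, W A * (A.card : ℝ) = p * Fintype.card α := by
    simp_rw [hcard, Finset.mul_sum]
    rw [Finset.sum_comm]
    simp_rw [mul_sub, mul_one, Finset.sum_sub_distrib, hav, hW1]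
    simp [mul_comm]
  have hE2 : ∑ A, W A * (∑ i ∈ I, (if Disjoint (D i) A then (1 : ℝ) else 0)) =
      ∑ i ∈ I, (1 - p) ^ (D i).card := by
    simp_rw [Finset.mul_sum]
    rw [Finset.sum_comm]
    simp_rw [hav]
  set K := p * Fintype.card α + ∑ i ∈ I, (1 - p) ^ (D i).card with hK
  have hlt : ∑ A, W A * K < ∑ A, W A * ((A.card : ℝ) +
      ∑ i ∈ I, (if Disjoint (D i) A then (1 : ℝ) else 0)) := by
    apply Finset.sum_lt_sum
    · intro A _
      exact mul_le_mul_of_nonneg_left (hcon A).le (hW0 A)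
    · have : ∃ A ∈ (univ : Finset (Finset α)), 0 < W A := by
        by_contra hc
        push Not at hc
        have := Finset.sum_nonpos hc
        linarith
      obtain ⟨A, hA, hAW⟩ := this
      exact ⟨A, hA, mul_lt_mul_of_pos_left (hcon A) hAW⟩
  rw [← Finset.sum_mul, hW1] at hlt
  simp_rw [mul_add, Finset.sum_add_distrib] at hlt
  rw [hE1, hE2] at hlt
  linarith

lemma aux_le {V : Type*} [Fintype V] [DecidableEq V]
    (G : SimpleGraph V) [DecidableRel G.Adj] (rf sf : V → ℕ) (s r δ k : ℕ)
    (hδ : δ = G.minDegree) (hs : ∀ v, sf v ≤ s) (hrf : ∀ v, r ≤ rf v)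
    (hk : (δ + 1) * r + 1 = s + k) (hk1 : 1 ≤ k) (p : ℝ) (hp0 : 0 ≤ p) (hp1 : p ≤ 1) :
    (rsDomNum G rf sf : ℝ) ≤ p * (Fintype.card V * r) +
      Fintype.card V * (((δ + 1) * r).choose k * (1 - p) ^ k) := by
  have hS : ∀ v, ∃ S ⊆ insert v (G.neighborFinset v), S.card = δ + 1 := by
    intro v
    apply Finset.exists_subset_card_eq
    rw [Finset.card_insert_of_notMem (by simp), G.card_neighborFinset_eq_degree, hδ]
    have := G.minDegree_le_degree v
    omega
  choose S hSsub hScard using hS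
  let C : V → Finset (V × Fin r) := fun v => S v ×ˢ univ
  have hC : ∀ v, (C v).card = (δ + 1) * r := fun v => by simp [C, hScard]
  obtain ⟨A, hA⟩ := aux_exists (α := V × Fin r) p hp0 hp1
    ((univ : Finset V).sigma (fun v => powersetCard k (C v))) (fun i => i.2)
  have hE : ∀ v, ∃ E ⊆ C v \ A, E.card = (C v \ A).card - (k - 1) := fun v =>
    Finset.exists_subset_card_eq (Nat.sub_le _ _)
  choose E hEsub hEcard using hE
  let A' := A ∪ univ.biUnion E
  have hEle : ∀ v, ((E v).card : ℝ) ≤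
      ∑ D ∈ powersetCard k (C v), (if Disjoint D A then (1 : ℝ) else 0) := by
    intro v
    rw [← Finset.sum_filter, Finset.sum_const, nsmul_eq_mul, mul_one]
    have h1 : (powersetCard k (C v)).filter (fun D => Disjoint D A) =
        powersetCard k (C v \ A) := by
      ext D
      simp only [mem_filter, mem_powersetCard, Finset.subset_sdiff]
      tauto
    rw [h1, Finset.card_powersetCard, hEcard]
    norm_cast
    by_cases h : (C v \ A).card ≤ k - 1
    · simp [Nat.sub_eq_zero_of_le h]
    · have := aux_choose (k - 1) ((C v \ A).card - (k - 1))
      rwa [Nat.add_sub_cancel' (by omega), Nat.sub_add_cancel hk1] at this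
  have hwt : (A'.card : ℝ) ≤ p * (Fintype.card V * r) +
      Fintype.card V * (((δ + 1) * r).choose k * (1 - p) ^ k) := by
    have h1 : A'.card ≤ A.card + ∑ v, (E v).card :=
      (Finset.card_union_le _ _).trans (by gcongr; exact Finset.card_biUnion_le)
    have h2 : (A'.card : ℝ) ≤ A.card + ∑ v, ((E v).card : ℝ) := by exact_mod_cast h1
    have h3 := Finset.sum_le_sum (fun v (_ : v ∈ (univ : Finset V)) => hEle v)
    rw [Finset.sum_sigma, Finset.sum_sigma] at hA
    have h4 : ∑ v : V, ∑ D ∈ powersetCard k (C v), (1 - p) ^ D.card =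
        Fintype.card V * (((δ + 1) * r).choose k * (1 - p) ^ k) := by
      have : ∀ v, ∑ D ∈ powersetCard k (C v), (1 - p) ^ D.card =
          (((δ + 1) * r).choose k * (1 - p) ^ k) := by
        intro v
        rw [Finset.sum_congr rfl (g := fun _ => (1 - p) ^ k)
          (fun D hD => by rw [(mem_powersetCard.1 hD).2])]
        rw [Finset.sum_const, card_powersetCard, hC, nsmul_eq_mul]
      simp [this]
    simp only [h4] at hA
    simp only [Fintype.card_prod, Fintype.card_fin, Nat.cast_mul] at hA
    linarith
  refine le_trans ?_ hwt
  norm_cast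
  apply Nat.sInf_le
  let f : V → ℕ := fun v => (A'.filter (fun x => x.1 = v)).card
  have hsum : ∀ T : Finset V, ∑ u ∈ T, f u = (A'.filter (fun x => x.1 ∈ T)).card := by
    intro T
    rw [Finset.card_eq_sum_card_fiberwise (f := Prod.fst) (t := T)]
    · apply Finset.sum_congr rfl
      intro u hu
      simp only [f]
      congr 1
      ext x
      simp only [mem_filter]
      constructor
      · rintro ⟨h1, rfl⟩; exact ⟨⟨h1, hu⟩, rfl⟩
      · rintro ⟨⟨h1, _⟩, h2⟩; exact ⟨h1, h2⟩
    · intro x hx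
      have := (mem_filter.1 (Finset.mem_coe.1 hx)).2
      simpa using this
  refine ⟨f, ?_, ?_, ?_⟩
  · intro v
    refine le_trans ?_ (hrf v)
    have : A'.filter (fun x => x.1 = v) ⊆ ({v} : Finset V) ×ˢ (univ : Finset (Fin r)) := by
      intro x hx
      exact Finset.mem_product.2 ⟨Finset.mem_singleton.2 (mem_filter.1 hx).2, mem_univ _⟩
    simpa using Finset.card_le_card this
  · intro v
    refine (hs v).trans ?_
    rw [hsum]
    have h1 : (C v ∩ A) ∪ E v ⊆ A'.filter (fun x => x.1 ∈ insert v (G.neighborFinset v)) := by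
      intro x hx
      have hxC : x ∈ C v ∧ x ∈ A' := by
        rcases Finset.mem_union.1 hx with h | h
        · exact ⟨(Finset.mem_inter.1 h).1, Finset.mem_union_left _ (Finset.mem_inter.1 h).2⟩
        · exact ⟨(Finset.mem_sdiff.1 (hEsub v h)).1,
            Finset.mem_union_right _ (Finset.mem_biUnion.2 ⟨v, mem_univ _, h⟩)⟩
      exact mem_filter.2 ⟨hxC.2, hSsub v (Finset.mem_product.1 hxC.1).1⟩
    have h2 : Disjoint (C v ∩ A) (E v) := by
      rw [Finset.disjoint_left]
      intro x hx hxE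
      exact (Finset.mem_sdiff.1 (hEsub v hxE)).2 (Finset.mem_inter.1 hx).2
    have h3 := Finset.card_le_card h1
    rw [Finset.card_union_of_disjoint h2, hEcard] at h3
    have h4 := Finset.card_inter_add_card_sdiff (C v) A
    rw [hC] at h4
    omega
  · rw [hsum]; simp

theorem rs_domination_log_bound
    {V : Type*} [Fintype V] [DecidableEq V] [Nonempty V]
    (G : SimpleGraph V) [DecidableRel G.Adj]
    (n : ℕ) (hn : n = Fintype.card V)
    (δ : ℕ) (hδ : δ = G.minDegree)
    (rf sf : V → ℕ)
    (s : ℕ) (hs : s = Finset.univ.sup sf)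
    (r : ℕ) (hr : r = s / (δ + 1) + 1)
    (hrτ : r ≤ Finset.univ.inf' Finset.univ_nonempty rf)
    (θ : ℝ) (hθ : θ = ((δ : ℝ) + 1) * r - s)
    (B : ℝ) (hB : B = (((δ + 1) * r).choose (s - 1) : ℕ)) :
    (rsDomNum G rf sf : ℝ) ≤
      ((Real.log (θ + 1) + Real.log B - Real.log r + 1) / (θ + 1)) * ((r : ℝ) * n) := by
  have hsv : ∀ v, sf v ≤ s := fun v => hs ▸ Finset.le_sup (mem_univ v)
  have hrv : ∀ v, r ≤ rf v := fun v => hrτ.trans (Finset.inf'_le _ (mem_univ v))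
  have hr1 : 1 ≤ r := by rw [hr]; exact Nat.le_add_left 1 _
  have hN : s < (δ + 1) * r := by
    rw [hr]; exact Nat.lt_mul_div_succ s (by omega)
  obtain ⟨k, hk⟩ : ∃ k, (δ + 1) * r + 1 = s + k := ⟨(δ + 1) * r + 1 - s, by omega⟩
  have hk2 : 2 ≤ k := by omega
  have hθk : θ + 1 = k := by
    have : ((δ : ℝ) + 1) * r + 1 = s + k := by exact_mod_cast hk
    rw [hθ]; linarith
  have hkR : (2 : ℝ) ≤ k := by exact_mod_cast hk2
  have hrR : (1 : ℝ) ≤ r := by exact_mod_cast hr1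
  rw [hθk]
  rcases Nat.eq_zero_or_pos s with hs0 | hs0
  · have hr' : r = 1 := by rw [hr, hs0]; simp
    have h0 := aux_le G rf sf s r δ k hδ hsv hrv hk (by omega) 0 le_rfl zero_le_one
    have hz : ((δ + 1) * r).choose k = 0 := Nat.choose_eq_zero_of_lt (by omega)
    rw [hz] at h0
    simp only [Nat.cast_zero, zero_mul, mul_zero, add_zero] at h0
    refine h0.trans ?_
    rw [hB, hs0, hr']
    simp only [Nat.zero_sub, Nat.choose_zero_right, Nat.cast_one, Real.log_one]
    have := Real.log_nonneg (show (1 : ℝ) ≤ k by linarith)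
    have : 0 ≤ Real.log k + 0 - 0 + 1 := by linarith
    positivity
  · have hBk : ((((δ + 1) * r).choose k : ℕ) : ℝ) = B := by
      rw [hB]
      congr 1
      apply Nat.choose_symm_of_eq_add
      omega
    have hBpos : 1 ≤ B := by
      rw [← hBk]
      exact_mod_cast Nat.choose_pos (show k ≤ (δ + 1) * r by omega)
    have hrB : (r : ℝ) ≤ k * B := by
      have h1 := aux_choose (k - 1) s
      rw [show k - 1 + s = (δ + 1) * r by omega, Nat.sub_add_cancel (by omega)] at h1
      have h3 : r ≤ s + 1 := by
        have := Nat.div_le_self s (δ + 1)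
        omega
      have h4 : r ≤ 2 * ((δ + 1) * r).choose k := by omega
      have h5 : (r : ℝ) ≤ 2 * B := by rw [← hBk]; exact_mod_cast h4
      nlinarith
    have hlog : Real.log r ≤ Real.log k + Real.log B := by
      rw [← Real.log_mul (by linarith) (by linarith)]
      exact Real.log_le_log (by linarith) hrB
    set p : ℝ := (Real.log k + Real.log B - Real.log r) / k with hp
    have hp0 : 0 ≤ p := div_nonneg (by linarith) (by linarith)
    have heq : (Real.log k + Real.log B - Real.log r + 1) / k = p + 1 / k := by
      rw [hp]; ring
    rw [heq, hn]
    have hcV : (0 : ℝ) ≤ Fintype.card V := by positivity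
    by_cases hp1 : p ≤ 1
    · have h := aux_le G rf sf s r δ k hδ hsv hrv hk (by omega) p hp0 hp1
      rw [hBk] at h
      have hq : (1 - p) ^ k ≤ Real.exp (-(p * k)) := by
        have h1 : 1 - p ≤ Real.exp (-p) := by
          have := Real.add_one_le_exp (-p); linarith
        calc (1 - p) ^ k ≤ Real.exp (-p) ^ k := pow_le_pow_left₀ (by linarith) h1 k
          _ = _ := by rw [← Real.exp_nat_mul]; congr 1; ring
      have hpk : -(p * k) = Real.log r - Real.log k - Real.log B := by
        rw [hp]; field_simp; ring
      rw [hpk, Real.exp_sub, Real.exp_sub, Real.exp_log (by linarith),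
        Real.exp_log (by linarith), Real.exp_log (by linarith)] at hq
      have hq2 : B * (1 - p) ^ k ≤ r / k := by
        calc B * (1 - p) ^ k ≤ B * (r / k / B) := mul_le_mul_of_nonneg_left hq (by linarith)
          _ = _ := by field_simp
      have := mul_le_mul_of_nonneg_left hq2 hcV
      calc _ ≤ _ := h
        _ ≤ p * (Fintype.card V * r) + Fintype.card V * (r / k) := by linarith
        _ = _ := by ring
    · have h := aux_le G rf sf s r δ k hδ hsv hrv hk (by omega) 1 zero_le_one le_rfl
      rw [sub_self, zero_pow (by omega)] at h
      have h1 : 1 ≤ p + 1 / k := by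
        have : (0 : ℝ) ≤ 1 / k := by positivity
        linarith
      have h2 : (0 : ℝ) ≤ r * Fintype.card V := by positivity
      nlinarith
end

section
/- For any finite simple graph G of order n with minimum degree δ > 0, if r̃ := ⌊s/δ⌋ + 1 satisfies r̃ ≤ τ, then with θ̃ = δ·r̃ − s, ρ̃ = 1/θ̃ and B̃_{s−1} = C(δ·r̃, s−1), the total ⟨r,s⟩-domination number satisfies γᵗ⟨r,s⟩(G) ≤ (1 − (r̃·ρ̃)^{ρ̃} / ((1+ρ̃)^{1+ρ̃} · B̃_{s−1}^{ρ̃})) · r̃·n. -/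
open Finset Real

/-- The total ⟨r,s⟩-domination number: the smallest weight of a total s-dominating r-function. -/
noncomputable def totalRsDomNum {V : Type*} [Fintype V] [DecidableEq V]
    (G : SimpleGraph V) [DecidableRel G.Adj] (rf sf : V → ℕ) : ℕ :=
  sInf {w : ℕ | ∃ f : V → ℕ, (∀ v, f v ≤ rf v) ∧
    (∀ v, sf v ≤ ∑ u ∈ G.neighborFinset v, f u) ∧ w = ∑ v, f v}

lemma sum_weight_superset {α : Type*} [Fintype α] [DecidableEq α] (p : ℝ) (e : Finset α) :
    ∑ S : Finset α, (p ^ S.card * (1 - p) ^ (univ \ S).card) * (if e ⊆ S then 1 else 0)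
      = p ^ e.card := by
  have h := Finset.prod_add (fun _ : α => p) (fun i => if i ∈ e then (0 : ℝ) else 1 - p) univ
  have h1 : ∏ i : α, (p + if i ∈ e then (0 : ℝ) else 1 - p) = p ^ e.card := by
    have : ∀ i : α, (p + if i ∈ e then (0 : ℝ) else 1 - p) = if i ∈ e then p else 1 := by
      intro i; split_ifs <;> ring
    simp only [this]
    rw [Finset.prod_ite_mem]
    simp
  rw [h1] at h
  rw [h, Finset.powerset_univ]
  refine Finset.sum_congr rfl fun S _ => ?_
  rw [Finset.prod_const, mul_assoc]
  congr 1
  split_ifs with hS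
  · rw [mul_one, ← Finset.prod_const]
    refine Finset.prod_congr rfl fun i hi => ?_
    rw [if_neg]
    intro hie
    exact (Finset.mem_sdiff.1 hi).2 (hS hie)
  · rw [mul_zero]
    obtain ⟨i, hi, hiS⟩ := Finset.not_subset.1 hS
    symm
    apply Finset.prod_eq_zero (i := i)
    · simp [hiS]
    · simp [hi]

lemma exists_indep {α : Type*} [Fintype α] [DecidableEq α] (p : ℝ) (hp0 : 0 ≤ p) (hp1 : p ≤ 1)
    (E : Finset (Finset α)) (k : ℕ) (hk : ∀ e ∈ E, e.card = k + 1) :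
    ∃ S : Finset α, (∀ e ∈ E, ¬ e ⊆ S) ∧
      p * Fintype.card α - E.card * p ^ (k + 1) ≤ S.card := by
  classical
  set w : Finset α → ℝ := fun S => p ^ S.card * (1 - p) ^ (univ \ S).card with hw
  have hw0 : ∀ S, 0 ≤ w S := fun S =>
    mul_nonneg (pow_nonneg hp0 _) (pow_nonneg (by linarith) _)
  have hsum : ∑ S, w S = 1 := by
    have := sum_weight_superset p (∅ : Finset α)
    simpa [hw] using this
  have hcard : ∑ S, w S * S.card = p * Fintype.card α := by
    have h1 : ∀ S : Finset α, (S.card : ℝ) = ∑ a : α, if ({a} : Finset α) ⊆ S then (1:ℝ) else 0 := by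
      intro S; simp
    simp_rw [h1, Finset.mul_sum]
    rw [Finset.sum_comm]
    simp_rw [hw, sum_weight_superset]
    simp [mul_comm]
  have hedge : ∑ S, w S * ((E.filter (· ⊆ S)).card : ℝ) = E.card * p ^ (k + 1) := by
    have h1 : ∀ S : Finset α, ((E.filter (· ⊆ S)).card : ℝ) = ∑ e ∈ E, if e ⊆ S then (1:ℝ) else 0 := by
      intro S; simp
    simp_rw [h1, Finset.mul_sum]
    rw [Finset.sum_comm]
    simp_rw [hw, sum_weight_superset]
    rw [Finset.sum_congr rfl (fun e he => by rw [hk e he])]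
    simp
  have hex : ∃ S : Finset α, p * Fintype.card α - E.card * p ^ (k + 1) ≤
      (S.card : ℝ) - (E.filter (· ⊆ S)).card := by
    by_contra! hcon
    set c := p * Fintype.card α - E.card * p ^ (k + 1) with hc
    have h2 : ∑ S, w S * ((S.card : ℝ) - (E.filter (· ⊆ S)).card) = c := by
      simp_rw [mul_sub]
      rw [Finset.sum_sub_distrib, hcard, hedge]
    have h3 : ∑ S, w S * (c - ((S.card : ℝ) - (E.filter (· ⊆ S)).card)) = 0 := by
      have : ∀ S, w S * (c - ((S.card : ℝ) - (E.filter (· ⊆ S)).card)) =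
        w S * c - w S * ((S.card : ℝ) - (E.filter (· ⊆ S)).card) := fun S => by ring
      simp_rw [this]
      rw [Finset.sum_sub_distrib, h2, ← Finset.sum_mul, hsum]; ring
    rw [Finset.sum_eq_zero_iff_of_nonneg
      (fun S _ => mul_nonneg (hw0 S) (sub_nonneg.2 (hcon S).le))] at h3
    have h4 : ∀ S, w S = 0 := fun S =>
      (mul_eq_zero.1 (h3 S (mem_univ S))).resolve_right (sub_pos.2 (hcon S)).ne'
    simp [h4] at hsum
  obtain ⟨S, hS⟩ := hex
  have hne : ∀ e : Finset α, e ∈ E → e.Nonempty := fun e he => by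
    rw [← Finset.card_pos, hk e he]; omega
  let ch : Finset α → Finset α := fun e => if h : e.Nonempty then {h.choose} else ∅
  let R := (E.filter (· ⊆ S)).biUnion ch
  have hR : R.card ≤ (E.filter (· ⊆ S)).card := by
    have := Finset.card_biUnion_le_card_mul (E.filter (· ⊆ S)) ch 1 (fun e _ => by
      simp only [ch]; split_ifs <;> simp)
    simpa using this
  refine ⟨S \ R, fun e he hsub => ?_, ?_⟩
  · have heS : e ⊆ S := hsub.trans Finset.sdiff_subset
    have hx := (hne e he).choose_spec
    have := (Finset.mem_sdiff.1 (hsub hx)).2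
    apply this
    refine Finset.mem_biUnion.2 ⟨e, Finset.mem_filter.2 ⟨he, heS⟩, ?_⟩
    simp [ch, hne e he]
  · have h5 := Finset.le_card_sdiff R S
    have h6 : S.card ≤ (S \ R).card + (E.filter (· ⊆ S)).card := by omega
    have h7 : (S.card : ℝ) ≤ (S \ R).card + (E.filter (· ⊆ S)).card := by exact_mod_cast h6
    linarith

/-- The bound for an arbitrary deletion probability. -/
lemma totalRsDomNum_le {V : Type*} [Fintype V] [DecidableEq V]
    (G : SimpleGraph V) [DecidableRel G.Adj] (rf sf : V → ℕ) (δ r s t : ℕ)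
    (hδ : ∀ v, δ ≤ G.degree v) (hs : ∀ v, sf v ≤ s) (hr : ∀ v, r ≤ rf v)
    (ht : δ * r = s + t) (q : ℝ) (hq0 : 0 ≤ q) (hq1 : q ≤ 1) :
    (totalRsDomNum G rf sf : ℝ) ≤ r * Fintype.card V -
      (q * (r * Fintype.card V) - Fintype.card V * ((δ * r).choose (t + 1) : ℕ) * q ^ (t + 1)) := by
  classical
  have hA : ∀ v, ∃ A : Finset (V × Fin r), A ⊆ G.neighborFinset v ×ˢ univ ∧ A.card = δ * r := by
    intro v
    apply Finset.exists_subset_card_eq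
    rw [Finset.card_product, Finset.card_univ, Fintype.card_fin, G.card_neighborFinset_eq_degree]
    exact Nat.mul_le_mul_right _ (hδ v)
  choose A hAs hAc using hA
  let E : Finset (Finset (V × Fin r)) := univ.biUnion fun v => (A v).powersetCard (t + 1)
  have hE : ∀ e ∈ E, e.card = t + 1 := by
    intro e he
    obtain ⟨v, _, hv⟩ := Finset.mem_biUnion.1 he
    exact (Finset.mem_powersetCard.1 hv).2
  have hEc : E.card ≤ Fintype.card V * (δ * r).choose (t + 1) := by
    apply Finset.card_biUnion_le_card_mul
    intro v _
    rw [Finset.card_powersetCard, hAc]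
  obtain ⟨S, hS, hSc⟩ := exists_indep q hq0 hq1 E t hE
  have hSA : ∀ v, (A v ∩ S).card ≤ t := by
    intro v
    by_contra! hcon
    obtain ⟨e, hes, hec⟩ := Finset.exists_subset_card_eq (Nat.succ_le_of_lt hcon)
    refine hS e (Finset.mem_biUnion.2 ⟨v, mem_univ v, ?_⟩) (hes.trans Finset.inter_subset_right)
    exact Finset.mem_powersetCard.2 ⟨hes.trans Finset.inter_subset_left, hec⟩
  let f : V → ℕ := fun v => (Sᶜ.filter (fun x => x.1 = v)).card
  have hfr : ∀ v, f v ≤ r := by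
    intro v
    have : (Sᶜ.filter (fun x => x.1 = v)) ⊆ ({v} : Finset V) ×ˢ (univ : Finset (Fin r)) := by
      intro x hx
      rw [Finset.mem_filter] at hx
      simp only [Finset.mem_product, Finset.mem_singleton, Finset.mem_univ, and_true]
      exact hx.2
    have := Finset.card_le_card this
    simpa using this
  have hsum : ∀ T : Finset V, ∑ u ∈ T, f u = (Sᶜ.filter (fun x => x.1 ∈ T)).card := by
    intro T
    rw [Finset.card_eq_sum_card_fiberwise (f := Prod.fst) (t := T)]
    · refine Finset.sum_congr rfl fun u hu => ?_
      simp only [f]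
      congr 1
      ext x
      simp only [Finset.mem_filter]
      constructor
      · rintro ⟨h1, h2⟩; exact ⟨⟨h1, h2 ▸ hu⟩, h2⟩
      · rintro ⟨⟨h1, _⟩, h2⟩; exact ⟨h1, h2⟩
    · intro x hx
      simp at hx ⊢
      exact hx.2
  have hdom : ∀ v, sf v ≤ ∑ u ∈ G.neighborFinset v, f u := by
    intro v
    rw [hsum]
    have h1 : A v \ S ⊆ Sᶜ.filter (fun x => x.1 ∈ G.neighborFinset v) := by
      intro x hx
      rw [Finset.mem_sdiff] at hx
      rw [Finset.mem_filter, Finset.mem_compl]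
      exact ⟨hx.2, (Finset.mem_product.1 (hAs v hx.1)).1⟩
    have h2 := Finset.card_le_card h1
    have h3 := Finset.card_sdiff_add_card_inter (A v) S
    have h4 := hSA v
    have h5 := hs v
    have h6 := hAc v
    omega
  have hle : totalRsDomNum G rf sf ≤ ∑ v, f v :=
    Nat.sInf_le ⟨f, fun v => (hfr v).trans (hr v), hdom, rfl⟩
  have htot : ∑ v, f v + S.card = r * Fintype.card V := by
    rw [hsum]
    simp only [Finset.mem_univ, Finset.filter_true]
    rw [Finset.card_compl_add_card]
    simp [mul_comm]
  have h1 : (totalRsDomNum G rf sf : ℝ) ≤ ((∑ v, f v : ℕ) : ℝ) := by exact_mod_cast hle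
  have h2 : ((∑ v, f v : ℕ) : ℝ) + S.card = r * Fintype.card V := by exact_mod_cast htot
  have h3 : (E.card : ℝ) ≤ Fintype.card V * ((δ * r).choose (t + 1) : ℕ) := by exact_mod_cast hEc
  have h4 := mul_le_mul_of_nonneg_right h3 (pow_nonneg hq0 (t + 1))
  rw [Fintype.card_prod, Fintype.card_fin] at hSc
  push_cast at hSc
  nlinarith

theorem total_rs_domination_bound
    {V : Type*} [Fintype V] [DecidableEq V] [Nonempty V]
    (G : SimpleGraph V) [DecidableRel G.Adj]
    (n : ℕ) (hn : n = Fintype.card V)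
    (δ : ℕ) (hδ : δ = G.minDegree)
    (hδ0 : 0 < δ)
    (rf sf : V → ℕ)
    (s : ℕ) (hs : s = Finset.univ.sup sf)
    (r : ℕ) (hr : r = s / δ + 1)
    (hrτ : r ≤ Finset.univ.inf' Finset.univ_nonempty rf)
    (θ : ℝ) (hθ : θ = (δ : ℝ) * r - s)
    (ρ : ℝ) (hρ : ρ = 1 / θ)
    (B : ℝ) (hB : B = ((δ * r).choose (s - 1) : ℕ)) :
    (totalRsDomNum G rf sf : ℝ) ≤
      (1 - ((r : ℝ) * ρ) ^ ρ / ((1 + ρ) ^ (1 + ρ) * B ^ ρ)) * ((r : ℝ) * n) := by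
  classical
  have hdeg : ∀ v, δ ≤ G.degree v := fun v => hδ ▸ G.minDegree_le_degree v
  have hsv : ∀ v, sf v ≤ s := fun v => hs ▸ Finset.le_sup (mem_univ v)
  have hrv : ∀ v, r ≤ rf v := fun v => hrτ.trans (Finset.inf'_le _ (mem_univ v))
  have hlt : s < δ * r := by
    rw [hr]; exact Nat.lt_mul_div_succ s hδ0
  obtain ⟨t, ht⟩ := Nat.exists_eq_add_of_lt hlt
  -- the integer value of the gap
  have ht' : δ * r = s + (t + 1) := ht
  have htR : (δ : ℝ) * r = s + (t + 1) := by exact_mod_cast ht'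
  have hθt : θ = ((t + 1 : ℕ) : ℝ) := by rw [hθ, htR]; push_cast; ring
  have hθ0 : 0 < θ := by rw [hθt]; positivity
  have hρ0 : 0 < ρ := by rw [hρ]; positivity
  have hρθ : ρ * θ = 1 := by rw [hρ]; field_simp
  have hr1 : 1 ≤ r := by rw [hr]; exact Nat.le_add_left 1 _
  have hr0 : (0 : ℝ) < r := by exact_mod_cast hr1
  have hB1 : 1 ≤ B := by
    rw [hB]
    exact_mod_cast Nat.choose_pos (by omega : s - 1 ≤ δ * r)
  have hB0 : 0 < B := by linarith
  set q : ℝ := ((r : ℝ) * ρ / ((1 + ρ) * B)) ^ ρ with hq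
  have hq0 : 0 ≤ q := by positivity
  have hRHS : ((r : ℝ) * ρ) ^ ρ / ((1 + ρ) ^ (1 + ρ) * B ^ ρ) = q / (1 + ρ) := by
    rw [hq, Real.div_rpow (by positivity) (by positivity), Real.mul_rpow (by positivity) hB0.le,
      Real.rpow_add (by positivity), Real.rpow_one]
    field_simp
  rw [hRHS]
  have hqθ : q ^ (t + 1) = (r : ℝ) * ρ / ((1 + ρ) * B) := by
    rw [← Real.rpow_natCast, hq, ← Real.rpow_mul (by positivity), ← hθt, hρθ, Real.rpow_one]
  rcases Nat.eq_zero_or_pos s with hs0 | hs0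
  · have hz : totalRsDomNum G rf sf ≤ 0 := by
      apply Nat.sInf_le
      refine ⟨fun _ => 0, fun v => Nat.zero_le _, fun v => ?_, by simp⟩
      have := hsv v
      simp; omega
    have hz' : (totalRsDomNum G rf sf : ℝ) ≤ 0 := by exact_mod_cast hz
    have hr' : r = 1 := by rw [hr, hs0]; simp
    have hq1 : q ≤ 1 := by
      apply Real.rpow_le_one (by positivity) _ hρ0.le
      rw [div_le_one (by positivity), hr']
      push_cast
      nlinarith
    refine hz'.trans (mul_nonneg ?_ (by positivity))
    rw [sub_nonneg, div_le_one (by positivity)]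
    linarith
  · have hch : (δ * r).choose (s - 1) = (δ * r).choose (t + 1 + 1) := by
      apply Nat.choose_symm_of_eq_add; omega
    have hBr : r ≤ (t + 1 + 1) * (δ * r).choose (t + 1 + 1) := by
      obtain ⟨m, hm⟩ : ∃ m, δ * r = m + 1 := ⟨δ * r - 1, by omega⟩
      have h1 := Nat.add_one_mul_choose_eq m (t + 1)
      have h2 : 0 < m.choose (t + 1) := Nat.choose_pos (by omega)
      rw [hm, mul_comm, ← h1, ← hm]
      calc r ≤ δ * r := Nat.le_mul_of_pos_left r hδ0
        _ ≤ _ := Nat.le_mul_of_pos_right _ h2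
    have hBr' : (r : ℝ) ≤ (θ + 1) * B := by
      rw [hθt, hB, hch]; exact_mod_cast hBr
    have hq1 : q ≤ 1 := by
      apply Real.rpow_le_one (by positivity) _ hρ0.le
      rw [div_le_one (by positivity)]
      calc (r : ℝ) * ρ ≤ (θ + 1) * B * ρ := by gcongr
        _ = (ρ * θ + ρ) * B := by ring
        _ = (1 + ρ) * B := by rw [hρθ]
    have key := totalRsDomNum_le G rf sf δ r s (t + 1) hdeg hsv hrv ht' q hq0 hq1
    rw [← hch, ← hB, ← hn, pow_succ, hqθ] at key
    refine key.trans (le_of_eq ?_)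
    field_simp
    ring
end

section
/- For any finite simple graph G of order n with minimum degree δ > 0, if r̃ := ⌊s/δ⌋ + 1 satisfies r̃ ≤ τ, then with θ̃ = δ·r̃ − s and B̃_{s−1} = C(δ·r̃, s−1), the total ⟨r,s⟩-domination number satisfies γᵗ⟨r,s⟩(G) ≤ ((ln(θ̃+1) + ln B̃_{s−1} − ln r̃ + 1)/(θ̃+1)) · r̃·n. -/
open Finset Real

lemma aux_choose_s3 (k y : ℕ) : y - k ≤ y.choose (k + 1) := by
  induction y with
  | zero => simp
  | succ y ih =>
    rw [Nat.choose_succ_succ']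
    rcases Nat.lt_or_ge y k with h | h
    · have : y + 1 - k = 0 := by omega
      omega
    · have := Nat.choose_pos h
      omega

/-- The product weight of a random subset. -/
noncomputable def auxW {E : Type*} [Fintype E] (p : ℝ) (S : Finset E) : ℝ :=
  p ^ S.card * (1 - p) ^ (Fintype.card E - S.card)

lemma auxW_disj {E : Type*} [Fintype E] [DecidableEq E] (p : ℝ) (U : Finset E) :
    ∑ S : Finset E, auxW p S * (if Disjoint U S then 1 else 0) = (1 - p) ^ U.card := by
  have h1 : ∑ S : Finset E, auxW p S * (if Disjoint U S then 1 else 0)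
      = ∑ S ∈ (Uᶜ).powerset, auxW p S := by
    simp only [mul_ite, mul_one, mul_zero]
    rw [← Finset.sum_filter]
    congr 1
    ext S
    simp only [Finset.mem_filter, Finset.mem_univ, true_and, Finset.mem_powerset]
    exact ⟨fun h => Finset.subset_compl_comm.mp (Finset.subset_compl_iff_disjoint_right.mpr h),
      fun h => Finset.subset_compl_iff_disjoint_right.mp (Finset.subset_compl_comm.mp h)⟩
  rw [h1]
  have h2 : ∀ S ∈ (Uᶜ).powerset, auxW p S =
      (1 - p) ^ U.card * (p ^ S.card * (1 - p) ^ ((Uᶜ).card - S.card)) := by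
    intro S hS
    have hc := Finset.card_le_card (Finset.mem_powerset.mp hS)
    have hU := Finset.card_add_card_compl U
    unfold auxW
    have : Fintype.card E - S.card = U.card + ((Uᶜ).card - S.card) := by omega
    rw [this, pow_add]
    ring
  rw [Finset.sum_congr rfl h2, ← Finset.mul_sum, Finset.sum_pow_mul_eq_add_pow]
  simp

lemma auxW_one {E : Type*} [Fintype E] [DecidableEq E] (p : ℝ) :
    ∑ S : Finset E, auxW p S = 1 := by
  simpa using auxW_disj p (∅ : Finset E)

lemma auxW_card {E : Type*} [Fintype E] [DecidableEq E] (p : ℝ) :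
    ∑ S : Finset E, auxW p S * (S.card : ℝ) = p * Fintype.card E := by
  have h : ∀ S : Finset E, (S.card : ℝ) =
      ∑ e : E, (1 - (if Disjoint {e} S then 1 else 0 : ℝ)) := by
    intro S
    have : ∀ e : E, (1 - (if Disjoint {e} S then 1 else 0 : ℝ)) = if e ∈ S then 1 else 0 := by
      intro e
      by_cases he : e ∈ S <;> simp [he]
    rw [Finset.sum_congr rfl fun e _ => this e]
    simp
  simp_rw [h, Finset.mul_sum]
  rw [Finset.sum_comm]
  simp_rw [mul_sub, Finset.sum_sub_distrib, auxW_disj, mul_one, auxW_one]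
  simp
  ring

lemma auxW_def {E : Type*} [Fintype E] [DecidableEq E] (p : ℝ) (h0 : 0 ≤ p) (h1 : p ≤ 1)
    (T : Finset E) (s : ℕ) (hs : 1 ≤ s) (hsT : s ≤ T.card) :
    ∑ S : Finset E, auxW p S * ((s - (S ∩ T).card : ℕ) : ℝ)
      ≤ (T.card.choose (s - 1) : ℝ) * (1 - p) ^ (T.card - s + 1) := by
  have key : ∀ S : Finset E, ((s - (S ∩ T).card : ℕ) : ℝ) ≤
      ∑ U ∈ T.powersetCard (T.card - s + 1), (if Disjoint U S then 1 else 0 : ℝ) := by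
    intro S
    have hsd : (T \ S).card + (S ∩ T).card = T.card := by
      rw [Finset.inter_comm]; exact Finset.card_sdiff_add_card_inter T S
    have hf : (T \ S).powersetCard (T.card - s + 1) =
        (T.powersetCard (T.card - s + 1)).filter (fun U => Disjoint U S) := by
      ext U
      simp only [Finset.mem_powersetCard, Finset.mem_filter, Finset.subset_sdiff]
      tauto
    rw [← Finset.sum_filter, ← hf]
    simp only [Finset.sum_const, Finset.card_powersetCard, nsmul_eq_mul, mul_one]
    have := aux_choose_s3 (T.card - s) (T \ S).card
    have h3 : s - (S ∩ T).card ≤ (T \ S).card - (T.card - s) := by omega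
    exact_mod_cast h3.trans this
  calc _ ≤ ∑ S : Finset E, auxW p S *
        ∑ U ∈ T.powersetCard (T.card - s + 1), (if Disjoint U S then 1 else 0 : ℝ) := by
        refine Finset.sum_le_sum fun S _ => mul_le_mul_of_nonneg_left (key S) ?_
        have : 0 ≤ 1 - p := by linarith
        unfold auxW; positivity
    _ = ∑ U ∈ T.powersetCard (T.card - s + 1), (1 - p) ^ U.card := by
        simp_rw [Finset.mul_sum]
        rw [Finset.sum_comm]
        simp_rw [auxW_disj]
    _ = ∑ U ∈ T.powersetCard (T.card - s + 1), (1 - p) ^ (T.card - s + 1) := by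
        refine Finset.sum_congr rfl fun U hU => ?_
        rw [(Finset.mem_powersetCard.mp hU).2]
    _ = _ := by
        rw [Finset.sum_const, Finset.card_powersetCard, nsmul_eq_mul]
        have : T.card.choose (T.card - s + 1) = T.card.choose (s - 1) := by
          rw [← Nat.choose_symm (show s - 1 ≤ T.card by omega)]
          congr 1; omega
        rw [this]

lemma aux_fix {V : Type*} [Fintype V] [DecidableEq V] (A : V → Finset V) (r s : ℕ)
    (hA : ∀ v, s ≤ (A v).card * r) (d : ℕ) : ∀ f : V → ℕ, (∀ v, f v ≤ r) →
    (∑ v, (s - ∑ u ∈ A v, f u)) = d →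
    ∃ g : V → ℕ, (∀ v, g v ≤ r) ∧ (∀ v, s ≤ ∑ u ∈ A v, g u) ∧
      ∑ v, g v ≤ ∑ v, f v + d := by
  induction d using Nat.strong_induction_on with
  | _ d ih =>
  intro f hf hd
  by_cases hall : ∀ v, s ≤ ∑ u ∈ A v, f u
  · exact ⟨f, hf, hall, by omega⟩
  push Not at hall
  obtain ⟨v, hv⟩ := hall
  have : ∃ u ∈ A v, f u < r := by
    by_contra! hcon
    have h1 : (A v).card • r ≤ ∑ u ∈ A v, f u := Finset.card_nsmul_le_sum (A v) f r hcon
    have h2 := hA v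
    simp only [smul_eq_mul] at h1
    omega
  obtain ⟨u, hu, hur⟩ := this
  let f' : V → ℕ := fun w => f w + if w = u then 1 else 0
  have hf' : ∀ w, f' w ≤ r := by
    intro w
    by_cases hw : w = u
    · subst hw; simp [f']; omega
    · simp [f', hw, hf w]
  have hsum : ∀ w, ∑ x ∈ A w, f' x = ∑ x ∈ A w, f x + if u ∈ A w then 1 else 0 := by
    intro w
    simp [f', Finset.sum_add_distrib]
  have htot : ∑ x, f' x = ∑ x, f x + 1 := by
    simp [f', Finset.sum_add_distrib]
  have hlt : ∑ v, (s - ∑ u ∈ A v, f' u) < d := by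
    rw [← hd]
    refine Finset.sum_lt_sum (fun w _ => ?_) ⟨v, Finset.mem_univ v, ?_⟩
    · rw [hsum]; omega
    · rw [hsum, if_pos hu]; omega
  obtain ⟨g, h1, h2, h3⟩ := ih _ hlt f' hf' rfl
  exact ⟨g, h1, h2, by omega⟩

lemma aux_choose2 (y : ℕ) : ∀ k : ℕ, 1 ≤ k → k + 1 ≤ y → y ≤ y.choose k := by
  induction y with
  | zero => intro k _ h; omega
  | succ y ih =>
    intro k h1 h2
    obtain ⟨k, rfl⟩ : ∃ j, k = j + 1 := ⟨k - 1, by omega⟩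
    rw [Nat.choose_succ_succ']
    rcases Nat.lt_or_ge (k + 1) y with h | h
    · have := ih (k + 1) h1 h
      have := Nat.choose_pos (show k ≤ y by omega)
      omega
    · obtain rfl : y = k + 1 := by omega
      simp

theorem total_rs_domination_log_bound
    {V : Type*} [Fintype V] [DecidableEq V] [Nonempty V]
    (G : SimpleGraph V) [DecidableRel G.Adj]
    (n : ℕ) (hn : n = Fintype.card V)
    (δ : ℕ) (hδ : δ = G.minDegree)
    (hδ0 : 0 < δ)
    (rf sf : V → ℕ)
    (s : ℕ) (hs : s = Finset.univ.sup sf)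
    (r : ℕ) (hr : r = s / δ + 1)
    (hrτ : r ≤ Finset.univ.inf' Finset.univ_nonempty rf)
    (θ : ℝ) (hθ : θ = (δ : ℝ) * r - s)
    (B : ℝ) (hB : B = ((δ * r).choose (s - 1) : ℕ)) :
    (totalRsDomNum G rf sf : ℝ) ≤
      ((Real.log (θ + 1) + Real.log B - Real.log r + 1) / (θ + 1)) * ((r : ℝ) * n) := by
  have hrv : ∀ v, r ≤ rf v := fun v => hrτ.trans (Finset.inf'_le _ (Finset.mem_univ v))
  have hsv : ∀ v, sf v ≤ s := fun v => hs ▸ Finset.le_sup (Finset.mem_univ v)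
  have hdeg : ∀ v, δ ≤ (G.neighborFinset v).card := fun v => by
    rw [G.card_neighborFinset_eq_degree, hδ]; exact G.minDegree_le_degree v
  choose A hAsub hAcard using fun v => Finset.exists_subset_card_eq (hdeg v)
  have hlt : s < δ * r := by rw [hr]; exact Nat.lt_mul_div_succ s hδ0
  have hr1 : 1 ≤ r := by rw [hr]; exact Nat.le_add_left 1 _
  have hγ : ∀ g : V → ℕ, (∀ v, g v ≤ r) → (∀ v, s ≤ ∑ u ∈ A v, g u) →
      totalRsDomNum G rf sf ≤ ∑ v, g v := by
    intro g h1 h2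
    refine Nat.sInf_le ⟨g, fun v => (h1 v).trans (hrv v), fun v => ?_, rfl⟩
    exact (hsv v).trans ((h2 v).trans (Finset.sum_le_sum_of_subset (hAsub v)))
  have hγ2 : ∀ S : Finset (V × Fin r), totalRsDomNum G rf sf ≤
      S.card + ∑ v, (s - (S ∩ (A v ×ˢ univ)).card) := by
    intro S
    let f : V → ℕ := fun v => (S.filter (fun e => e.1 = v)).card
    have hf : ∀ v, f v ≤ r := by
      intro v
      have : S.filter (fun e => e.1 = v) ⊆ ({v} : Finset V) ×ˢ (univ : Finset (Fin r)) := by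
        intro e he
        simp only [Finset.mem_filter] at he
        simp only [Finset.mem_product, Finset.mem_singleton, Finset.mem_univ, and_true]
        exact he.2
      simpa using Finset.card_le_card this
    have hsumf : ∀ X : Finset V, ∑ u ∈ X, f u = (S ∩ (X ×ˢ univ)).card := by
      intro X
      rw [Finset.card_eq_sum_card_fiberwise (f := Prod.fst) (t := X)]
      · refine Finset.sum_congr rfl fun u hu => ?_
        change (S.filter (fun e => e.1 = u)).card = _
        congr 1
        ext e
        simp only [Finset.mem_filter, Finset.mem_inter, Finset.mem_product, Finset.mem_univ,
          and_true]
        constructor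
        · rintro ⟨h1, rfl⟩; exact ⟨⟨h1, hu⟩, rfl⟩
        · rintro ⟨⟨h1, _⟩, h2⟩; exact ⟨h1, h2⟩
      · intro e he
        simp at he
        exact he.2
    obtain ⟨g, h1, h2, h3⟩ := aux_fix A r s (fun v => by rw [hAcard]; exact hlt.le) _ f hf rfl
    have h4 := hγ g h1 h2
    have h5 := hsumf univ
    simp only [hsumf] at h3
    simp at h3
    omega
  have hkR : θ + 1 = ((δ * r - s + 1 : ℕ) : ℝ) := by
    rw [hθ]; push_cast [Nat.cast_sub hlt.le]; ring
  set k := δ * r - s + 1 with hk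
  have hkpos : (0 : ℝ) < k := by positivity
  have hr0 : (0 : ℝ) < r := by exact_mod_cast hr1
  have hn0 : (0 : ℝ) ≤ n := by positivity
  have hB1 : 1 ≤ (δ * r).choose (s - 1) := Nat.choose_pos (by omega)
  have hB0 : 0 < B := by rw [hB]; exact_mod_cast hB1
  have hkB : r ≤ k * (δ * r).choose (s - 1) := by
    rcases Nat.lt_or_ge s 2 with h | h
    · have hr' : r ≤ k := by
        have : r ≤ δ * r := Nat.le_mul_of_pos_left r hδ0
        omega
      nlinarith
    · have hc : δ * r ≤ (δ * r).choose (s - 1) := by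
        exact aux_choose2 _ _ (by omega) (by omega)
      have : r ≤ δ * r := Nat.le_mul_of_pos_left r hδ0
      have : 1 ≤ k := by omega
      nlinarith
  have hkB' : (r : ℝ) ≤ k * B := by rw [hB]; exact_mod_cast hkB
  rw [hkR]
  have hlog : Real.log k + Real.log B - Real.log r = Real.log (k * B / r) := by
    rw [Real.log_div (by positivity) (by positivity), Real.log_mul (by positivity) (by positivity)]
  rw [hlog]
  set p := Real.log (k * B / r) / k with hp
  have hpk : Real.log (k * B / r) = p * k := by rw [hp]; field_simp
  have hp0 : 0 ≤ p := by
    apply div_nonneg (Real.log_nonneg _) hkpos.le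
    rw [le_div_iff₀ hr0]; linarith
  have hR : (Real.log (k * B / r) + 1) / k * (r * n) = p * (r * n) + r * n / k := by
    rw [hpk]; field_simp
  rw [hR]
  have hlast : (0 : ℝ) ≤ r * n / k := by positivity
  rcases Nat.eq_zero_or_pos s with hs0 | hs1
  · have h := hγ (fun _ => 0) (fun _ => by simp) (fun _ => by simp [hs0])
    simp at h
    rw [h]
    push_cast
    positivity
  rcases le_or_gt p 1 with hp1 | hp1
  · have h1p : 0 ≤ 1 - p := by linarith
    have hmain : (totalRsDomNum G rf sf : ℝ) ≤ p * (r * n) + n * (B * (1 - p) ^ k) := by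
      calc (totalRsDomNum G rf sf : ℝ)
          = ∑ S : Finset (V × Fin r), auxW p S * (totalRsDomNum G rf sf : ℝ) := by
            rw [← Finset.sum_mul, auxW_one, one_mul]
        _ ≤ ∑ S : Finset (V × Fin r), auxW p S *
              ((S.card : ℝ) + ∑ v, ((s - (S ∩ (A v ×ˢ univ)).card : ℕ) : ℝ)) := by
            refine Finset.sum_le_sum fun S _ => mul_le_mul_of_nonneg_left ?_ ?_
            · exact_mod_cast hγ2 S
            · unfold auxW; positivity
        _ = p * (r * n) + ∑ v, ∑ S : Finset (V × Fin r),
              auxW p S * ((s - (S ∩ (A v ×ˢ univ)).card : ℕ) : ℝ) := by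
            simp_rw [mul_add, Finset.sum_add_distrib, auxW_card, Finset.mul_sum]
            rw [Finset.sum_comm]
            congr 1
            rw [Fintype.card_prod, Fintype.card_fin, hn]
            push_cast
            ring
        _ ≤ p * (r * n) + ∑ v : V, B * (1 - p) ^ k := by
            gcongr with v
            have hc : (A v ×ˢ (univ : Finset (Fin r))).card = δ * r := by simp [hAcard]
            have := auxW_def p hp0 hp1 (A v ×ˢ (univ : Finset (Fin r))) s hs1 (by omega)
            rw [hc, ← hk, ← hB] at this
            exact this
        _ = _ := by simp [hn]
    have hexp : (1 - p) ^ k ≤ r / (k * B) := by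
      calc (1 - p) ^ k ≤ (Real.exp (-p)) ^ k := by
            gcongr
            exact Real.one_sub_le_exp_neg p
        _ = Real.exp (-Real.log (k * B / r)) := by
            rw [hpk, ← Real.exp_nat_mul]; congr 1; ring
        _ = r / (k * B) := by
            rw [Real.exp_neg, Real.exp_log (by positivity), inv_div]
    have h2 : n * (B * (1 - p) ^ k) ≤ n * (B * (r / (k * B))) := by gcongr
    have h3 : n * (B * (r / (k * B))) = r * n / k := by field_simp
    linarith
  · have h := hγ (fun _ => r) (fun _ => le_rfl) (fun v => by
      simp [hAcard]; exact hlt.le)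
    have h' : (totalRsDomNum G rf sf : ℝ) ≤ r * n := by
      have : totalRsDomNum G rf sf ≤ r * n := by
        simp at h; rw [hn, mul_comm]; exact h
      exact_mod_cast this
    nlinarith [mul_nonneg hr0.le hn0]
end

section
/- For any finite simple graph G of order n with minimum degree δ such that δ̄ := δ − φ > 0, where φ = max{k, l−1}, the parametric domination number satisfies γ_{k,l}(G) ≤ (1 − δ̄ / ((1+δ̄)^{1+1/δ̄} · b_{φ−1}^{1/δ̄})) · n, where b_{φ−1} = C(δ, φ−1). -/
open Finset Real

/-- The parametric domination number γ_{k,l}: the minimum cardinality of a set D such that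
every vertex outside D has at least k members of D in its closed neighbourhood, and every
vertex of D has at least l members of D in its closed neighbourhood. -/
noncomputable def paramDomNum {V : Type*} [Fintype V] [DecidableEq V]
    (G : SimpleGraph V) [DecidableRel G.Adj] (k l : ℕ) : ℕ :=
  sInf {m : ℕ | ∃ D : Finset V,
    (∀ v, v ∉ D → k ≤ ((insert v (G.neighborFinset v)) ∩ D).card) ∧
    (∀ v, v ∈ D → l ≤ ((insert v (G.neighborFinset v)) ∩ D).card) ∧
    m = D.card}

lemma pdb_weight {V : Type*} [Fintype V] [DecidableEq V] (q : ℝ) (T : Finset V) :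
    ∑ B : Finset V, (q ^ B.card * (1 - q) ^ (univ \ B).card) * (if T ⊆ B then 1 else 0)
      = q ^ T.card := by
  have h := Finset.prod_add (fun _ : V => q) (fun i : V => if i ∈ T then 0 else 1 - q) univ
  have h1 : ∏ i : V, (q + (if i ∈ T then 0 else 1 - q)) = q ^ T.card := by
    have : ∀ i : V, (q + (if i ∈ T then 0 else 1 - q)) = if i ∈ T then q else 1 := by
      intro i; split_ifs <;> ring
    simp only [this]
    rw [Finset.prod_ite]
    simp
  rw [← h1, h, Finset.powerset_univ]
  apply Finset.sum_congr rfl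
  intro B _
  rw [Finset.prod_const, mul_assoc]
  congr 1
  by_cases hT : T ⊆ B
  · rw [if_pos hT, mul_one, ← Finset.prod_const]
    apply Finset.prod_congr rfl
    intro i hi
    have : i ∉ T := fun h => (Finset.mem_sdiff.1 hi).2 (hT h)
    simp [this]
  · rw [if_neg hT, mul_zero]
    obtain ⟨i, hi, hiB⟩ := Finset.not_subset.1 hT
    symm
    apply Finset.prod_eq_zero (i := i)
    · simp [hiB]
    · simp [hi]

lemma pdb_choose (s x : ℕ) : x - s ≤ x.choose (s + 1) := by
  rcases le_or_gt x s with h | h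
  · simp [Nat.sub_eq_zero_of_le h]
  · obtain ⟨j, rfl⟩ := Nat.exists_eq_add_of_lt h
    clear h
    induction j with
    | zero => simp
    | succ j ih =>
      have e : s + (j + 1) + 1 = (s + j + 1) + 1 := by ring
      rw [e, Nat.choose_succ_succ']
      have : 0 < (s + j + 1).choose s := Nat.choose_pos (by omega)
      omega

/-- Deterministic step: a vertex set obtained from the complement of `B`. -/
lemma pdb_det {V : Type*} [Fintype V] [DecidableEq V]
    (G : SimpleGraph V) [DecidableRel G.Adj] (k l φ s : ℕ)
    (hk : k ≤ φ) (hl : l ≤ φ + 1) (S : V → Finset V)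
    (hS : ∀ v, S v ⊆ G.neighborFinset v) (hSc : ∀ v, (S v).card = φ + s) (B : Finset V) :
    paramDomNum G k l ≤ (univ \ B).card + ∑ v, ((S v ∩ B).card).choose (s + 1) := by
  have hE : ∀ v, ∃ E ⊆ S v ∩ B, E.card = (S v ∩ B).card - s := fun v =>
    Finset.exists_subset_card_eq (Nat.sub_le _ _)
  choose E hEs hEc using hE
  set D : Finset V := (univ \ B) ∪ univ.biUnion E with hD
  have key : ∀ v, φ ≤ (G.neighborFinset v ∩ D).card := by
    intro v
    have h1 : (S v \ B) ∪ E v ⊆ G.neighborFinset v ∩ D := by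
      intro i hi
      rw [Finset.mem_union] at hi
      rw [Finset.mem_inter]
      rcases hi with hi | hi
      · rw [Finset.mem_sdiff] at hi
        exact ⟨hS v hi.1, by simp [hD, hi.2]⟩
      · refine ⟨hS v (Finset.mem_inter.1 (hEs v hi)).1, ?_⟩
        rw [hD]
        exact Finset.mem_union_right _ (Finset.mem_biUnion.2 ⟨v, Finset.mem_univ v, hi⟩)
    have h2 : Disjoint (S v \ B) (E v) := by
      rw [Finset.disjoint_left]
      intro i hi hi'
      exact (Finset.mem_sdiff.1 hi).2 (Finset.mem_inter.1 (hEs v hi')).2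
    have h3 := Finset.card_le_card h1
    rw [Finset.card_union_of_disjoint h2, hEc] at h3
    have h4 := Finset.card_sdiff_add_card_inter (S v) B
    rw [hSc] at h4
    omega
  have hmem : paramDomNum G k l ≤ D.card := by
    apply Nat.sInf_le
    refine ⟨D, ?_, ?_, rfl⟩
    · intro v _
      refine (hk.trans (key v)).trans (Finset.card_le_card ?_)
      exact Finset.inter_subset_inter_right (Finset.subset_insert _ _)
    · intro v hv
      rw [Finset.insert_inter_of_mem hv, Finset.card_insert_of_notMem (by simp)]
      have := key v
      omega
  refine hmem.trans ((Finset.card_union_le _ _).trans ?_)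
  refine Nat.add_le_add_left (Finset.card_biUnion_le.trans ?_) _
  apply Finset.sum_le_sum
  intro v _
  rw [hEc]
  exact pdb_choose s _

lemma pdb_choose_sum {V : Type*} [DecidableEq V] (S B : Finset V) (t : ℕ) :
    (((S ∩ B).card.choose t : ℕ) : ℝ) = ∑ T ∈ S.powersetCard t, (if T ⊆ B then (1:ℝ) else 0) := by
  rw [Finset.sum_boole, ← Finset.card_powersetCard]
  congr 2
  ext T
  simp only [Finset.mem_powersetCard, Finset.mem_filter, Finset.subset_inter_iff]
  tauto

lemma pdb_prob {V : Type*} [Fintype V] [DecidableEq V]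
    (G : SimpleGraph V) [DecidableRel G.Adj] (k l φ s : ℕ)
    (hk : k ≤ φ) (hl : l ≤ φ + 1) (hd : φ + s ≤ G.minDegree) (q : ℝ) (h0 : 0 ≤ q) (h1 : q ≤ 1) :
    (paramDomNum G k l : ℝ) ≤
      (1 - q + ((φ + s).choose (s + 1) : ℕ) * q ^ (s + 1)) * Fintype.card V := by
  have hS : ∀ v, ∃ S ⊆ G.neighborFinset v, S.card = φ + s := fun v =>
    Finset.exists_subset_card_eq (by
      rw [G.card_neighborFinset_eq_degree]; exact hd.trans (G.minDegree_le_degree v))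
  choose S hSs hSc using hS
  let w : Finset V → ℝ := fun B => q ^ B.card * (1 - q) ^ (univ \ B).card
  have hw : ∀ B, 0 ≤ w B := fun B => mul_nonneg (pow_nonneg h0 _) (pow_nonneg (by linarith) _)
  have hT : ∀ T : Finset V, ∑ B : Finset V, w B * (if T ⊆ B then 1 else 0) = q ^ T.card :=
    fun T => pdb_weight q T
  have hw1 : ∑ B : Finset V, w B = 1 := by
    have := hT ∅
    simpa using this
  have hcard : ∑ B : Finset V, w B * (B.card : ℝ) = Fintype.card V * q := by
    have e : ∀ B : Finset V, (B.card : ℝ) = ∑ v : V, (if {v} ⊆ B then (1:ℝ) else 0) := by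
      intro B
      simp
    simp only [e, Finset.mul_sum]
    rw [Finset.sum_comm]
    simp only [hT]
    simp
  have hch : ∀ v, ∑ B : Finset V, w B * (((S v ∩ B).card.choose (s + 1) : ℕ) : ℝ)
      = ((φ + s).choose (s + 1) : ℕ) * q ^ (s + 1) := by
    intro v
    simp only [pdb_choose_sum, Finset.mul_sum]
    rw [Finset.sum_comm]
    simp only [hT]
    rw [Finset.sum_congr rfl (fun T hT' => by rw [(Finset.mem_powersetCard.1 hT').2]),
      Finset.sum_const, Finset.card_powersetCard, hSc, nsmul_eq_mul]
  have hdet : ∀ B : Finset V, (paramDomNum G k l : ℝ) ≤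
      (Fintype.card V : ℝ) - B.card + ∑ v, (((S v ∩ B).card.choose (s + 1) : ℕ) : ℝ) := by
    intro B
    have := pdb_det G k l φ s hk hl S hSs hSc B
    have h2 : ((univ \ B).card : ℝ) = (Fintype.card V : ℝ) - B.card := by
      have h3 : (univ \ B).card + B.card = Fintype.card V := by
        rw [Finset.card_sdiff_add_card_eq_card (Finset.subset_univ B), Finset.card_univ]
      rw [← h3]; push_cast; ring
    rw [← h2]
    exact_mod_cast this
  calc (paramDomNum G k l : ℝ) = ∑ B : Finset V, w B * (paramDomNum G k l : ℝ) := by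
        rw [← Finset.sum_mul, hw1, one_mul]
    _ ≤ ∑ B : Finset V, w B * ((Fintype.card V : ℝ) - B.card +
          ∑ v, (((S v ∩ B).card.choose (s + 1) : ℕ) : ℝ)) :=
        Finset.sum_le_sum fun B _ => mul_le_mul_of_nonneg_left (hdet B) (hw B)
    _ = (∑ B : Finset V, w B) * Fintype.card V - ∑ B : Finset V, w B * (B.card : ℝ) +
          ∑ v, ∑ B : Finset V, w B * (((S v ∩ B).card.choose (s + 1) : ℕ) : ℝ) := by
        rw [Finset.sum_comm, Finset.sum_mul, ← Finset.sum_sub_distrib, ← Finset.sum_add_distrib]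
        apply Finset.sum_congr rfl
        intro B _
        rw [← Finset.mul_sum]
        ring
    _ = _ := by
        simp only [hw1, hcard, hch]
        rw [Finset.sum_const, nsmul_eq_mul, Finset.card_univ]
        ring

theorem param_domination_bound
    {V : Type*} [Fintype V] [DecidableEq V]
    (G : SimpleGraph V) [DecidableRel G.Adj]
    (n : ℕ) (hn : n = Fintype.card V)
    (δ : ℕ) (hδ : δ = G.minDegree)
    (k l : ℕ) (hk : 1 ≤ k) (hl : 1 ≤ l)
    (φ : ℕ) (hφ : φ = max k (l - 1))
    (db : ℝ) (hdb : db = (δ : ℝ) - φ) (hpos : 0 < db)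
    (b : ℝ) (hb : b = (δ.choose (φ - 1) : ℕ)) :
    (paramDomNum G k l : ℝ) ≤
      (1 - db / ((1 + db) ^ (1 + 1 / db) * b ^ (1 / db))) * n := by
  have hlt : φ < δ := by
    have : (φ : ℝ) < δ := by linarith
    exact_mod_cast this
  obtain ⟨s, hs⟩ := Nat.exists_eq_add_of_le hlt.le
  have hdbs : db = s := by rw [hdb, hs]; push_cast; ring
  have hφ1 : 1 ≤ φ := by omega
  have hb' : b = ((φ + s).choose (s + 1) : ℕ) := by
    rw [hb, hs]
    congr 1
    apply Nat.choose_symm_of_eq_add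
    omega
  have hb1 : 1 ≤ b := by
    rw [hb]
    exact_mod_cast Nat.choose_pos (by omega)
  have hb0 : 0 < b := by linarith
  set q : ℝ := ((1 + db) ^ (1 / db) * b ^ (1 / db))⁻¹ with hq
  have hA : 1 ≤ (1 + db) ^ (1 / db) := Real.one_le_rpow (by linarith) (by positivity)
  have hB : 1 ≤ b ^ (1 / db) := Real.one_le_rpow hb1 (by positivity)
  have hAB : 1 ≤ (1 + db) ^ (1 / db) * b ^ (1 / db) := by nlinarith
  have h0 : 0 ≤ q := by positivity
  have h1 : q ≤ 1 := inv_le_one_of_one_le₀ hAB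
  have hqs : q ^ s = ((1 + db) * b)⁻¹ := by
    rw [hq, inv_pow, ← Real.mul_rpow (by linarith) hb0.le, ← Real.rpow_natCast, ← hdbs,
      ← Real.rpow_mul (by positivity), one_div_mul_cancel hpos.ne', Real.rpow_one]
  have main := pdb_prob G k l φ s (by omega) (by omega) (by omega) q h0 h1
  rw [← hn, ← hb'] at main
  refine main.trans (le_of_eq ?_)
  congr 1
  rw [pow_succ, hqs, Real.rpow_add (by linarith), Real.rpow_one, hq]
  have : (1 + db) ≠ 0 := by linarith
  field_simp
  ring
end

section
/- For any finite simple graph G of order n with minimum degree δ ≥ φ, where φ = max{k, l−1}, the parametric domination number satisfies γ_{k,l}(G) ≤ ((ln(δ − φ + 1) + ln b_{φ−1} + 1)/(δ − φ + 1)) · n, where b_{φ−1} = C(δ, φ−1). -/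
open Finset Real

/-- probability weight of a subset -/
noncomputable def pdWeight {V : Type*} [Fintype V] [DecidableEq V] (p : ℝ) (A : Finset V) : ℝ :=
  (∏ _i ∈ A, p) * ∏ _i ∈ univ \ A, (1 - p)

lemma pdWeight_disjoint {V : Type*} [Fintype V] [DecidableEq V] (p : ℝ) (U : Finset V) :
    ∑ A ∈ (univ : Finset V).powerset, pdWeight p A * (if Disjoint A U then 1 else 0)
      = (1 - p) ^ U.card := by
  have h := Finset.prod_add (fun i : V => if i ∈ U then 0 else p) (fun _ => 1 - p) univ
  have h1 : ∏ i : V, ((if i ∈ U then 0 else p) + (1 - p)) = (1 - p) ^ U.card := by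
    have : ∀ i : V, ((if i ∈ U then 0 else p) + (1 - p)) = if i ∈ U then (1 - p) else 1 := by
      intro i; split_ifs <;> ring
    simp only [this]
    rw [Finset.prod_ite]
    simp
  rw [← h1, h]
  refine Finset.sum_congr rfl fun A _ => ?_
  unfold pdWeight
  by_cases hd : Disjoint A U
  · have : ∏ i ∈ A, (if i ∈ U then 0 else p) = ∏ _i ∈ A, p :=
      Finset.prod_congr rfl fun i hi => if_neg (Finset.disjoint_left.1 hd hi)
    rw [this]; simp [hd]
  · obtain ⟨x, hxA, hxU⟩ := Finset.not_disjoint_iff.1 hd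
    have : ∏ i ∈ A, (if i ∈ U then 0 else p) = 0 :=
      Finset.prod_eq_zero hxA (if_pos hxU)
    rw [this]; simp [hd]

lemma pdWeight_sum {V : Type*} [Fintype V] [DecidableEq V] (p : ℝ) :
    ∑ A ∈ (univ : Finset V).powerset, pdWeight p A = 1 := by
  simpa using pdWeight_disjoint p (∅ : Finset V)

lemma pdWeight_card {V : Type*} [Fintype V] [DecidableEq V] (p : ℝ) :
    ∑ A ∈ (univ : Finset V).powerset, pdWeight p A * (A.card : ℝ) = Fintype.card V * p := by
  have h : ∀ A : Finset V, (A.card : ℝ) = ∑ v : V, (1 - if Disjoint A {v} then (1:ℝ) else 0) := by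
    intro A
    have : ∀ v : V, (1 - if Disjoint A {v} then (1:ℝ) else 0) = if v ∈ A then 1 else 0 := by
      intro v; by_cases hv : v ∈ A <;> simp [hv]
    rw [Finset.sum_congr rfl fun v _ => this v]
    simp
  simp only [h, Finset.mul_sum]
  rw [Finset.sum_comm]
  simp only [mul_sub, mul_one, Finset.sum_sub_distrib, pdWeight_disjoint, pdWeight_sum]
  simp

lemma pd_deficit {V : Type*} [DecidableEq V] (S A : Finset V) (f : ℕ) (hf1 : 1 ≤ f)
    (hf : f ≤ S.card) :
    f - (S ∩ A).card ≤ ((powersetCard (f - 1) S).filter (fun T => Disjoint A (S \ T))).card := by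
  by_cases hm : f ≤ (S ∩ A).card
  · omega
  push Not at hm
  have hc : (S ∩ A).card + (S \ A).card = S.card := by
    rw [Finset.card_inter_add_card_sdiff]
  set j := f - 1 - (S ∩ A).card with hj
  have h1 : (powersetCard j (S \ A)).card ≤
      ((powersetCard (f - 1) S).filter (fun T => Disjoint A (S \ T))).card := by
    apply Finset.card_le_card_of_injOn (fun T => T ∪ (S ∩ A))
    · intro T hT
      have hT := Finset.mem_powersetCard.1 (Finset.mem_coe.1 hT)
      have hdis : Disjoint T (S ∩ A) := by
        rw [Finset.disjoint_left]; intro x hx hx'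
        have := hT.1 hx
        simp at this hx'
        tauto
      simp only [Finset.coe_filter, Set.mem_ofPred_eq, Finset.mem_powersetCard]
      refine ⟨⟨Finset.union_subset (hT.1.trans Finset.sdiff_subset) Finset.inter_subset_left, ?_⟩, ?_⟩
      · rw [Finset.card_union_of_disjoint hdis, hT.2]; omega
      · rw [Finset.disjoint_left]; intro x hx hx'
        simp at hx'
        tauto
    · intro T hT T' hT' h
      have hT := (Finset.mem_powersetCard.1 (Finset.mem_coe.1 hT)).1
      have hT' := (Finset.mem_powersetCard.1 (Finset.mem_coe.1 hT')).1
      ext x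
      have hx := congrArg (fun s => x ∈ s) h
      have a := @hT x
      have a' := @hT' x
      simp at hx a a'
      tauto
  have h2 : (j + 1).choose j ≤ (S \ A).card.choose j := Nat.choose_le_choose _ (by omega)
  rw [Nat.choose_succ_self_right] at h2
  rw [Finset.card_powersetCard] at h1
  omega

lemma pd_bound {V : Type*} [Fintype V] [DecidableEq V]
    (G : SimpleGraph V) [DecidableRel G.Adj] (k l f : ℕ) (hk : k ≤ f) (hl : l ≤ f + 1)
    (S : V → Finset V) (hS : ∀ v, S v ⊆ G.neighborFinset v) (hc : ∀ v, f ≤ (S v).card)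
    (A : Finset V) :
    paramDomNum G k l ≤ A.card + ∑ v, (f - (S v ∩ A).card) := by
  have hB : ∀ v, ∃ B ⊆ S v \ A, B.card = f - (S v ∩ A).card := fun v =>
    Finset.exists_subset_card_eq (by
      have := Finset.card_inter_add_card_sdiff (S v) A
      have := hc v
      omega)
  choose B hBs hBc using hB
  set D := A ∪ univ.biUnion B with hD
  have key : ∀ v, f ≤ (G.neighborFinset v ∩ D).card := by
    intro v
    have hsub : (S v ∩ A) ∪ B v ⊆ G.neighborFinset v ∩ D := by
      apply Finset.union_subset
      · exact Finset.inter_subset_inter (hS v) Finset.subset_union_left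
      · apply Finset.subset_inter
        · exact ((hBs v).trans Finset.sdiff_subset).trans (hS v)
        · exact (Finset.subset_biUnion_of_mem B (Finset.mem_univ v)).trans
            Finset.subset_union_right
    have hdis : Disjoint (S v ∩ A) (B v) := by
      rw [Finset.disjoint_left]; intro x hx hx'
      have := hBs v hx'
      simp at this hx
      tauto
    have := Finset.card_le_card hsub
    rw [Finset.card_union_of_disjoint hdis, hBc] at this
    omega
  have h1 : paramDomNum G k l ≤ D.card := by
    apply Nat.sInf_le
    refine ⟨D, ?_, ?_, rfl⟩
    · intro v _
      exact (hk.trans (key v)).trans (Finset.card_le_card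
        (Finset.inter_subset_inter_right (Finset.subset_insert _ _)))
    · intro v hv
      rw [Finset.insert_inter_of_mem hv, Finset.card_insert_of_notMem (by simp)]
      have := key v
      omega
  refine h1.trans ((Finset.card_union_le _ _).trans ?_)
  gcongr
  refine Finset.card_biUnion_le.trans ?_
  simp [hBc]

lemma pd_expect {V : Type*} [Fintype V] [DecidableEq V]
    (G : SimpleGraph V) [DecidableRel G.Adj] (k l f d : ℕ) (hk : k ≤ f) (hl : l ≤ f + 1)
    (hf1 : 1 ≤ f) (hfd : f ≤ d)
    (S : V → Finset V) (hS : ∀ v, S v ⊆ G.neighborFinset v) (hc : ∀ v, (S v).card = d)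
    (p : ℝ) (hp0 : 0 ≤ p) (hp1 : p ≤ 1) :
    (paramDomNum G k l : ℝ) ≤
      Fintype.card V * (p + (d.choose (f - 1) : ℝ) * (1 - p) ^ (d - f + 1)) := by
  have hw : ∀ A : Finset V, 0 ≤ pdWeight p A := fun A =>
    mul_nonneg (Finset.prod_nonneg fun _ _ => hp0) (Finset.prod_nonneg fun _ _ => by linarith)
  have hA : ∀ A : Finset V, (paramDomNum G k l : ℝ) ≤ A.card +
      ∑ v, ∑ T ∈ powersetCard (f - 1) (S v), if Disjoint A (S v \ T) then (1:ℝ) else 0 := by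
    intro A
    have h1 := pd_bound G k l f hk hl S hS (fun v => hfd.trans (hc v).ge) A
    have h2 : ∑ v, (f - (S v ∩ A).card) ≤ ∑ v,
        ((powersetCard (f - 1) (S v)).filter (fun T => Disjoint A (S v \ T))).card :=
      Finset.sum_le_sum fun v _ => pd_deficit (S v) A f hf1 (hfd.trans (hc v).ge)
    have h3 := h1.trans (Nat.add_le_add_left h2 _)
    have h4 : (paramDomNum G k l : ℝ) ≤ ((A.card + ∑ v,
        ((powersetCard (f - 1) (S v)).filter (fun T => Disjoint A (S v \ T))).card : ℕ) : ℝ) := by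
      exact_mod_cast h3
    simpa [Finset.sum_boole] using h4
  calc (paramDomNum G k l : ℝ)
      = ∑ A ∈ (univ : Finset V).powerset, pdWeight p A * (paramDomNum G k l : ℝ) := by
        rw [← Finset.sum_mul, pdWeight_sum, one_mul]
    _ ≤ ∑ A ∈ (univ : Finset V).powerset, pdWeight p A * (A.card +
      ∑ v, ∑ T ∈ powersetCard (f - 1) (S v), if Disjoint A (S v \ T) then (1:ℝ) else 0) :=
        Finset.sum_le_sum fun A _ => mul_le_mul_of_nonneg_left (hA A) (hw A)
    _ = Fintype.card V * p + ∑ v, ∑ T ∈ powersetCard (f - 1) (S v), (1 - p) ^ (S v \ T).card := by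
        simp only [mul_add, Finset.sum_add_distrib, pdWeight_card, Finset.mul_sum]
        congr 1
        rw [Finset.sum_comm]
        refine Finset.sum_congr rfl fun v _ => ?_
        rw [Finset.sum_comm]
        refine Finset.sum_congr rfl fun T _ => ?_
        exact pdWeight_disjoint p _
    _ = Fintype.card V * (p + (d.choose (f - 1) : ℝ) * (1 - p) ^ (d - f + 1)) := by
        have : ∀ v, ∑ T ∈ powersetCard (f - 1) (S v), (1 - p) ^ (S v \ T).card
            = (d.choose (f - 1) : ℝ) * (1 - p) ^ (d - f + 1) := by
          intro v
          have h : ∀ T ∈ powersetCard (f - 1) (S v), (1 - p) ^ (S v \ T).card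
              = (1 - p) ^ (d - f + 1) := by
            intro T hT
            rw [Finset.mem_powersetCard] at hT
            rw [Finset.card_sdiff_of_subset hT.1, hc, hT.2]
            congr 1
            omega
          rw [Finset.sum_congr rfl h]
          simp [hc]
        simp only [this]
        simp
        ring

theorem param_domination_log_bound
    {V : Type*} [Fintype V] [DecidableEq V]
    (G : SimpleGraph V) [DecidableRel G.Adj]
    (n : ℕ) (hn : n = Fintype.card V)
    (δ : ℕ) (hδ : δ = G.minDegree)
    (k l : ℕ) (hk : 1 ≤ k) (hl : 1 ≤ l)
    (φ : ℕ) (hφ : φ = max k (l - 1))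
    (hφδ : φ ≤ δ)
    (b : ℝ) (hb : b = (δ.choose (φ - 1) : ℕ)) :
    (paramDomNum G k l : ℝ) ≤
      ((Real.log ((δ : ℝ) - φ + 1) + Real.log b + 1) / ((δ : ℝ) - φ + 1)) * n := by
  have hkφ : k ≤ φ := by omega
  have hlφ : l ≤ φ + 1 := by omega
  have hS : ∀ v, ∃ S ⊆ G.neighborFinset v, S.card = δ := fun v =>
    Finset.exists_subset_card_eq (by
      rw [hδ, G.card_neighborFinset_eq_degree]; exact G.minDegree_le_degree v)
  choose S hS hc using hS
  have hE := pd_expect G k l φ δ hkφ hlφ (by omega) hφδ S hS hc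
  rw [← hn] at hE
  have hMc : (δ : ℝ) - φ + 1 = ((δ - φ + 1 : ℕ) : ℝ) := by
    rw [Nat.cast_add, Nat.cast_sub hφδ, Nat.cast_one]
  rw [← hb] at hE
  rw [hMc]
  set M := δ - φ + 1 with hM
  have hM1 : (1:ℝ) ≤ M := by exact_mod_cast (by omega : 1 ≤ M)
  have hb1 : 1 ≤ b := by
    rw [hb]; exact_mod_cast Nat.choose_pos (by omega)
  have hMpos : (0:ℝ) < M := by linarith
  have hbpos : 0 < b := by linarith
  have hlM := Real.log_nonneg hM1
  have hlb := Real.log_nonneg hb1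
  set p := (Real.log M + Real.log b) / M with hp
  have hp0 : 0 ≤ p := by positivity
  have hsplit : (Real.log M + Real.log b + 1) / M = p + 1 / M := by rw [hp]; ring
  rw [hsplit, mul_comm]
  by_cases hp1 : p ≤ 1
  · refine (hE p hp0 hp1).trans ?_
    gcongr
    have h1 : (1 - p) ^ M ≤ Real.exp (-p) ^ M :=
      pow_le_pow_left₀ (by linarith) (Real.one_sub_le_exp_neg p) M
    have h2 : Real.exp (-p) ^ M = 1 / (M * b) := by
      rw [← Real.exp_nat_mul]
      have : (M:ℝ) * -p = -(Real.log (M * b)) := by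
        rw [Real.log_mul hMpos.ne' hbpos.ne', hp]; field_simp
      rw [this, Real.exp_neg, Real.exp_log (by positivity), one_div]
    calc b * (1 - p) ^ M ≤ b * (1 / (M * b)) := by rw [← h2]; gcongr
      _ = 1 / M := by field_simp
  · push Not at hp1
    have h := hE 1 zero_le_one le_rfl
    have h0 : (1 - 1 : ℝ) ^ M = 0 := by rw [sub_self]; exact zero_pow (by omega)
    rw [h0, mul_zero, add_zero] at h
    refine h.trans ?_
    gcongr
    have : 0 < 1 / (M:ℝ) := by positivity
    linarith
end

section
/- For any finite simple graph G of order n with minimum degree δ ≥ max{k, l−1}, writing δ̂ = δ − max{k,l} + 1, the parametric domination number satisfies γ_{k,l}(G) ≤ ((ln(δ̂ + 1) + ln(b_{k−1} + b_{l−2}) + 1)/(δ̂ + 1)) · n, where b_t = C(δ, t) and b_{−1} = 0. -/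
open Finset Real

/-- Bernoulli weight of a set. -/
noncomputable def bw {V : Type*} [Fintype V] [DecidableEq V] (p : ℝ) (A : Finset V) : ℝ :=
  p ^ A.card * (1 - p) ^ (univ \ A).card

lemma bw_disj {V : Type*} [Fintype V] [DecidableEq V] (p : ℝ) (T : Finset V) :
    ∑ A : Finset V, bw p A * (if Disjoint T A then (1:ℝ) else 0) = (1 - p) ^ T.card := by
  have h := Finset.prod_add (fun i : V => if i ∈ T then (0:ℝ) else p) (fun _ => 1 - p) univ
  have h1 : ∏ i : V, ((if i ∈ T then (0:ℝ) else p) + (1 - p)) = (1 - p) ^ T.card := by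
    have : ∀ i : V, ((if i ∈ T then (0:ℝ) else p) + (1 - p)) = if i ∈ T then 1 - p else 1 := by
      intro i; split_ifs <;> ring
    simp_rw [this]
    rw [Finset.prod_ite_mem]
    simp
  rw [← h1, h, Finset.powerset_univ]
  refine Finset.sum_congr rfl fun A _ => ?_
  unfold bw
  rw [Finset.prod_const]
  by_cases hd : Disjoint T A
  · rw [if_pos hd]
    have : ∏ i ∈ A, (if i ∈ T then (0:ℝ) else p) = p ^ A.card := by
      rw [← Finset.prod_const]
      refine Finset.prod_congr rfl fun i hi => ?_
      rw [if_neg]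
      intro hT
      exact Finset.disjoint_left.mp hd hT hi
    rw [this]; ring
  · rw [if_neg hd]
    obtain ⟨i, hiT, hiA⟩ := Finset.not_disjoint_iff.mp hd
    rw [Finset.prod_eq_zero hiA (by simp [hiT])]
    ring

lemma bw_sum {V : Type*} [Fintype V] [DecidableEq V] (p : ℝ) :
    ∑ A : Finset V, bw p A = 1 := by
  have := bw_disj (V := V) p ∅
  simpa using this

lemma bw_card {V : Type*} [Fintype V] [DecidableEq V] (p : ℝ) :
    ∑ A : Finset V, bw p A * (A.card : ℝ) = p * Fintype.card V := by
  have h : ∀ A : Finset V, bw p A * (A.card : ℝ)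
      = ∑ v : V, (bw p A - bw p A * (if Disjoint {v} A then (1:ℝ) else 0)) := by
    intro A
    have : (A.card : ℝ) = ∑ v : V, (1 - (if Disjoint {v} A then (1:ℝ) else 0)) := by
      have h2 : ∀ v : V, (1 - (if Disjoint {v} A then (1:ℝ) else 0)) = if v ∈ A then 1 else 0 := by
        intro v
        by_cases hv : v ∈ A <;> simp [hv]
      simp_rw [h2]
      simp
    rw [this, Finset.mul_sum]
    refine Finset.sum_congr rfl fun v _ => ?_
    ring
  simp_rw [h]
  rw [Finset.sum_comm]
  simp_rw [Finset.sum_sub_distrib, bw_disj, bw_sum]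
  simp
  ring

lemma bw_count {V : Type*} [Fintype V] [DecidableEq V] (p : ℝ) (S U : Finset V)
    (hSU : Disjoint S U) (t : ℕ) :
    ∑ A : Finset V, bw p A * (if Disjoint U A then ((S \ A).card.choose t : ℝ) else 0)
      = (S.card.choose t : ℝ) * (1 - p) ^ (t + U.card) := by
  have h : ∀ A : Finset V, bw p A * (if Disjoint U A then ((S \ A).card.choose t : ℝ) else 0)
      = ∑ T ∈ S.powersetCard t, bw p A * (if Disjoint (T ∪ U) A then (1:ℝ) else 0) := by
    intro A
    rw [← Finset.mul_sum]
    congr 1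
    by_cases hU : Disjoint U A
    · rw [if_pos hU, ← Finset.card_powersetCard, Finset.sum_boole]
      congr 2
      ext T
      simp only [Finset.mem_powersetCard, Finset.mem_filter, Finset.disjoint_union_left, hU,
        and_true, Finset.subset_sdiff]
      tauto
    · rw [if_neg hU]
      symm
      refine Finset.sum_eq_zero fun T _ => ?_
      rw [if_neg]
      rw [Finset.disjoint_union_left]
      tauto
  simp_rw [h]
  rw [Finset.sum_comm]
  simp_rw [bw_disj]
  rw [← Finset.card_powersetCard, ← nsmul_eq_mul]
  refine Finset.sum_eq_card_nsmul fun T hT => ?_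
  rw [Finset.mem_powersetCard] at hT
  rw [Finset.card_union_of_disjoint (hSU.mono_left hT.1), hT.2]

lemma bw_exists {V : Type*} [Fintype V] [DecidableEq V] (p : ℝ) (h0 : 0 ≤ p) (h1 : p ≤ 1)
    (F : Finset V → ℝ) (c : ℝ) (h : ∑ A : Finset V, bw p A * F A ≤ c) : ∃ A, F A ≤ c := by
  by_contra! hc
  have hw : ∀ A : Finset V, 0 ≤ bw p A := fun A =>
    mul_nonneg (pow_nonneg h0 _) (pow_nonneg (by linarith) _)
  have e : ∑ A : Finset V, bw p A * c = c := by rw [← Finset.sum_mul, bw_sum, one_mul]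
  have hpos : ∃ A : Finset V, 0 < bw p A := by
    by_contra! hn
    have := bw_sum (V := V) p
    have h2 : ∑ A : Finset V, bw p A ≤ 0 := Finset.sum_nonpos fun A _ => hn A
    linarith
  obtain ⟨A, hA⟩ := hpos
  have : ∑ A : Finset V, bw p A * c < ∑ A : Finset V, bw p A * F A :=
    Finset.sum_lt_sum (fun B _ => mul_le_mul_of_nonneg_left (hc B).le (hw B))
      ⟨A, Finset.mem_univ _, mul_lt_mul_of_pos_left (hc A) hA⟩
  linarith

lemma le_choose_aux (j a : ℕ) : j ≤ (a + j).choose (a + 1) := by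
  induction a with
  | zero => simp
  | succ a ih =>
    rw [show a + 1 + j = (a + j) + 1 by ring, Nat.choose_succ_succ]
    omega

lemma req_le (δ r m : ℕ) (hr : r ≤ δ) :
    r - m ≤ (δ - m).choose (δ - r + 1) := by
  by_cases h : r ≤ m
  · simp [Nat.sub_eq_zero_of_le h]
  · have := le_choose_aux (r - m) (δ - r)
    rwa [show δ - r + (r - m) = δ - m by omega] at this

lemma extend_set {V : Type*} [Fintype V] [DecidableEq V] (N : V → Finset V) (r : V → ℕ)
    (hr : ∀ v, r v ≤ (N v).card) (A : Finset V) :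
    ∃ D, A ⊆ D ∧ (∀ v, r v ≤ (N v ∩ D).card) ∧
      D.card ≤ A.card + ∑ v, (r v - (N v ∩ A).card) := by
  have h : ∀ v, ∃ S ⊆ N v \ A, S.card = r v - (N v ∩ A).card := by
    intro v
    apply Finset.exists_subset_card_eq
    have := Finset.card_sdiff_add_card_inter (N v) A
    have := hr v
    omega
  choose S hS hc using h
  refine ⟨A ∪ univ.biUnion S, Finset.subset_union_left, fun v => ?_, ?_⟩
  · have hsub : (N v ∩ A) ∪ S v ⊆ N v ∩ (A ∪ univ.biUnion S) := by
      intro x hx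
      rw [Finset.mem_union, Finset.mem_inter] at hx
      rw [Finset.mem_inter, Finset.mem_union]
      rcases hx with hx | hx
      · exact ⟨hx.1, Or.inl hx.2⟩
      · exact ⟨(Finset.mem_sdiff.mp (hS v hx)).1,
          Or.inr (Finset.mem_biUnion.mpr ⟨v, Finset.mem_univ _, hx⟩)⟩
    have hdis : Disjoint (N v ∩ A) (S v) := by
      rw [Finset.disjoint_left]
      intro x hx hx2
      exact (Finset.mem_sdiff.mp (hS v hx2)).2 (Finset.mem_inter.mp hx).2
    have := Finset.card_le_card hsub
    rw [Finset.card_union_of_disjoint hdis, hc] at this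
    omega
  · refine (Finset.card_union_le _ _).trans ?_
    gcongr
    refine Finset.card_biUnion_le.trans ?_
    simp [hc]

lemma choose_p (b : ℝ) (hb : 1 ≤ b) (d : ℕ) (hd : 1 ≤ d) :
    ∃ p : ℝ, 0 ≤ p ∧ p ≤ 1 ∧
      p + b * (1 - p) ^ d ≤ (Real.log d + Real.log b + 1) / d := by
  have hd' : (1:ℝ) ≤ d := by exact_mod_cast hd
  have hdp : (0:ℝ) < d := by linarith
  have hl1 := Real.log_nonneg hd'
  have hl2 := Real.log_nonneg hb
  set L := Real.log d + Real.log b with hL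
  by_cases h : L / d ≤ 1
  · refine ⟨L / d, by positivity, h, ?_⟩
    have h1 : 1 - L / d ≤ Real.exp (-(L / d)) := by
      have := Real.add_one_le_exp (-(L / d)); linarith
    have h2 : (1 - L / d) ^ d ≤ Real.exp (-(L / d)) ^ d :=
      pow_le_pow_left₀ (by linarith) h1 d
    have h3 : Real.exp (-(L / d)) ^ d = 1 / (d * b) := by
      rw [← Real.exp_nat_mul, show (d:ℝ) * -(L / d) = -L by field_simp, Real.exp_neg, hL,
        Real.exp_add, Real.exp_log hdp, Real.exp_log (by linarith)]
      simp
    rw [h3] at h2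
    have h4 : b * (1 - L / d) ^ d ≤ b * (1 / (d * b)) :=
      mul_le_mul_of_nonneg_left h2 (by linarith)
    have h5 : b * (1 / (d * b)) = 1 / d := by
      have : b ≠ 0 := by linarith
      field_simp
    rw [add_div L 1 (d:ℝ)]
    linarith
  · refine ⟨1, by norm_num, le_refl _, ?_⟩
    push Not at h
    have : (0:ℝ) ^ d = 0 := zero_pow (by omega)
    rw [sub_self, this, add_div L 1 (d:ℝ)]
    have : (0:ℝ) < 1 / d := by positivity
    linarith

lemma dom_le {V : Type*} [Fintype V] [DecidableEq V]
    (G : SimpleGraph V) [DecidableRel G.Adj] (k l : ℕ) (D : Finset V)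
    (h1 : ∀ v, v ∉ D → k ≤ (G.neighborFinset v ∩ D).card)
    (h2 : ∀ v, v ∈ D → l - 1 ≤ (G.neighborFinset v ∩ D).card) :
    paramDomNum G k l ≤ D.card := by
  refine Nat.sInf_le ⟨D, fun v hv => ?_, fun v hv => ?_, rfl⟩
  · rw [Finset.insert_inter_of_notMem hv]
    exact h1 v hv
  · rw [Finset.insert_inter_of_mem hv, Finset.card_insert_of_notMem (by simp)]
    have := h2 v hv
    omega

/-- Core counting bound, for inside requirement `s` and outside requirement `r`. -/
lemma core {V : Type*} [Fintype V] [DecidableEq V]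
    (G : SimpleGraph V) [DecidableRel G.Adj] (k l δ d : ℕ) (hδ : δ = G.minDegree)
    (hk : 1 ≤ k) (hl : 1 ≤ l) (hkδ : k ≤ δ) (hlδ : l ≤ δ + 1) (hd : d + max k l = δ + 2)
    (b : ℝ) (hb : b = (δ.choose (k - 1) : ℕ) + if 2 ≤ l then (δ.choose (l - 2) : ℕ) else 0)
    (p : ℝ) (h0 : 0 ≤ p) (h1 : p ≤ 1) :
    (paramDomNum G k l : ℝ) ≤ (p + b * (1 - p) ^ d) * Fintype.card V := by
  have hN : ∀ v, ∃ S ⊆ G.neighborFinset v, S.card = δ := by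
    intro v
    apply Finset.exists_subset_card_eq
    rw [hδ, SimpleGraph.card_neighborFinset_eq_degree]
    exact G.minDegree_le_degree v
  choose N hNs hNc using hN
  have hvN : ∀ v, v ∉ N v := fun v hv => by
    have := hNs v hv
    simp at this
  have hcard : ∀ v (A : Finset V), (N v \ A).card = δ - (N v ∩ A).card := fun v A => by
    have := Finset.card_sdiff_add_card_inter (N v) A
    rw [hNc] at this
    omega
  have hmono : ∀ v (D : Finset V), (N v ∩ D).card ≤ (G.neighborFinset v ∩ D).card := fun v D =>
    Finset.card_le_card (Finset.inter_subset_inter_right (hNs v))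
  have hq0 : (0:ℝ) ≤ 1 - p := by linarith
  have hq1 : 1 - p ≤ 1 := by linarith
  -- the inside cost
  have cin : ∀ v, ∑ A : Finset V, bw p A * (if 2 ≤ l then
      ((N v \ A).card.choose (δ - (l - 1) + 1) : ℝ) else 0)
      ≤ (if 2 ≤ l then (δ.choose (l - 2) : ℝ) else 0) * (1 - p) ^ d := by
    intro v
    by_cases h2 : 2 ≤ l
    · simp only [if_pos h2]
      have := bw_count p (N v) ∅ (by simp) (δ - (l - 1) + 1)
      simp only [Finset.disjoint_empty_left, if_true, Finset.card_empty, add_zero] at this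
      rw [this, hNc]
      rw [← Nat.choose_symm (show l - 2 ≤ δ by omega),
        show δ - (l - 2) = δ - (l - 1) + 1 by omega]
      refine mul_le_mul_of_nonneg_left ?_ (by positivity)
      exact pow_le_pow_of_le_one hq0 hq1 (by omega)
    · simp [h2]
  have reqin : ∀ v (A : Finset V), ((l - 1 - (N v ∩ A).card : ℕ) : ℝ) ≤ (if 2 ≤ l then
      ((N v \ A).card.choose (δ - (l - 1) + 1) : ℝ) else 0) := by
    intro v A
    by_cases h2 : 2 ≤ l
    · rw [if_pos h2, hcard]
      exact_mod_cast req_le δ (l - 1) _ (by omega)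
    · rw [if_neg h2, show l - 1 = 0 by omega]
      simp
  by_cases hkl : l ≤ k
  · -- cost outside
    have cout : ∀ v, ∑ A : Finset V, bw p A * (if Disjoint {v} A then
      ((N v \ A).card.choose (δ - k + 1) : ℝ) else 0) = (δ.choose (k - 1) : ℝ) * (1 - p) ^ d := by
      intro v
      rw [bw_count p (N v) {v} (by simpa using hvN v), hNc,
        ← Nat.choose_symm (show k - 1 ≤ δ by omega), show δ - (k - 1) = δ - k + 1 by omega,
        Finset.card_singleton, show δ - k + 1 + 1 = d by omega]
    obtain ⟨A, hA⟩ := bw_exists p h0 h1 (fun A : Finset V => (A.card : ℝ) + ∑ v,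
      ((if Disjoint {v} A then ((N v \ A).card.choose (δ - k + 1) : ℝ) else 0) +
        (if 2 ≤ l then ((N v \ A).card.choose (δ - (l - 1) + 1) : ℝ) else 0)))
      ((p + b * (1 - p) ^ d) * Fintype.card V) (by
        simp_rw [mul_add, Finset.sum_add_distrib, bw_card, mul_add, Finset.sum_add_distrib,
          Finset.mul_sum]
        rw [Finset.sum_comm, Finset.sum_congr rfl (fun v _ => cout v), Finset.sum_comm]
        have := Finset.sum_le_sum (fun v (_ : v ∈ (univ : Finset V)) => cin v)
        simp only [Finset.sum_const, Finset.card_univ, nsmul_eq_mul] at this ⊢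
        rw [hb]
        push_cast
        linarith)
    obtain ⟨D, hAD, hD, hDc⟩ := extend_set N (fun v => if v ∈ A then l - 1 else k)
      (fun v => by rw [hNc]; split_ifs <;> omega) A
    refine le_trans ?_ hA
    have hle : paramDomNum G k l ≤ D.card := by
      apply dom_le
      · intro v hv
        have := hD v
        rw [if_neg (fun h => hv (hAD h))] at this
        exact this.trans (hmono v D)
      · intro v hv
        refine le_trans ?_ ((hD v).trans (hmono v D))
        split_ifs <;> omega
    have := hle.trans hDc
    refine (Nat.cast_le.mpr this).trans ?_
    push_cast
    gcongr with v
    by_cases hv : v ∈ A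
    · rw [if_pos hv]
      have h3 : ¬ Disjoint {v} A := by simpa using hv
      rw [if_neg h3, zero_add]
      exact reqin v A
    · rw [if_neg hv]
      have h3 : Disjoint {v} A := by simpa using hv
      rw [if_pos h3, hcard]
      have h4 : ((k - (N v ∩ A).card : ℕ) : ℝ)
          ≤ ((δ - (N v ∩ A).card).choose (δ - k + 1) : ℝ) := by
        exact_mod_cast req_le δ k _ hkδ
      have h5 : (0:ℝ) ≤ (if 2 ≤ l then
        ((δ - (N v ∩ A).card).choose (δ - (l - 1) + 1) : ℝ) else 0) := by
        split_ifs <;> positivity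
      linarith
  · obtain ⟨A, hA⟩ := bw_exists p h0 h1 (fun A : Finset V => (A.card : ℝ) + ∑ v,
        (if 2 ≤ l then ((N v \ A).card.choose (δ - (l - 1) + 1) : ℝ) else 0))
      ((p + b * (1 - p) ^ d) * Fintype.card V) (by
        simp_rw [mul_add, Finset.sum_add_distrib, bw_card, Finset.mul_sum]
        rw [Finset.sum_comm]
        have := Finset.sum_le_sum (fun v (_ : v ∈ (univ : Finset V)) => cin v)
        simp only [Finset.sum_const, Finset.card_univ, nsmul_eq_mul] at this ⊢
        have h6 : (0:ℝ) ≤ (δ.choose (k - 1) : ℝ) * (1 - p) ^ d * Fintype.card V := by positivity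
        rw [hb]
        push_cast
        linarith)
    obtain ⟨D, hAD, hD, hDc⟩ := extend_set N (fun v => l - 1)
      (fun v => by rw [hNc]; omega) A
    refine le_trans ?_ hA
    have hle : paramDomNum G k l ≤ D.card := by
      apply dom_le
      · intro v hv
        have := (hD v).trans (hmono v D)
        omega
      · intro v hv
        exact (hD v).trans (hmono v D)
    have := hle.trans hDc
    refine (Nat.cast_le.mpr this).trans ?_
    push_cast
    gcongr with v
    exact reqin v A

theorem param_domination_log_bound_two
    {V : Type*} [Fintype V] [DecidableEq V]
    (G : SimpleGraph V) [DecidableRel G.Adj]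
    (n : ℕ) (hn : n = Fintype.card V)
    (δ : ℕ) (hδ : δ = G.minDegree)
    (k l : ℕ) (hk : 1 ≤ k) (hl : 1 ≤ l)
    (hδkl : max k (l - 1) ≤ δ)
    (dh : ℝ) (hdh : dh = (δ : ℝ) - max k l + 1)
    (b : ℝ) (hb : b = (δ.choose (k - 1) : ℕ) + if 2 ≤ l then (δ.choose (l - 2) : ℕ) else 0) :
    (paramDomNum G k l : ℝ) ≤
      ((Real.log (dh + 1) + Real.log b + 1) / (dh + 1)) * n := by
  have hkδ : k ≤ δ := (le_max_left _ _).trans hδkl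
  have hlδ : l ≤ δ + 1 := by have := (le_max_right k (l-1)).trans hδkl; omega
  obtain ⟨d, hd⟩ : ∃ d, d + max k l = δ + 2 := ⟨δ + 2 - max k l, by omega⟩
  have hd1 : 1 ≤ d := by omega
  have hdd : dh + 1 = (d : ℝ) := by
    have : (d : ℝ) + ((max k l : ℕ) : ℝ) = δ + 2 := by exact_mod_cast hd
    rw [hdh]
    push_cast at this ⊢
    linarith
  have hb1 : 1 ≤ b := by
    have h1 : (1:ℝ) ≤ (δ.choose (k - 1) : ℕ) := by
      exact_mod_cast Nat.choose_pos (show k - 1 ≤ δ by omega)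
    have h2 : (0:ℝ) ≤ ((if 2 ≤ l then (δ.choose (l - 2) : ℕ) else 0 : ℕ) : ℝ) := Nat.cast_nonneg _
    rw [hb]
    push_cast at h2 ⊢
    linarith
  obtain ⟨p, h0, h1, hp⟩ := choose_p b hb1 d hd1
  rw [hdd, hn]
  refine (core G k l δ d hδ hk hl hkδ hlδ hd b hb p h0 h1).trans ?_
  gcongr
end

section
/- For any finite simple graph G of order n with minimum degree δ > 0 and any integer k ≥ 1, with r = ⌊k/(δ+1)⌋ + 1, θ = (δ+1)r − k, ρ = 1/θ and B_{k−1} = C((δ+1)r, k−1), the {k}-domination number satisfies γ_{{k}}(G) ≤ (1 − (rρ)^ρ / ((1+ρ)^{1+ρ} · B_{k−1}^ρ)) · r·n. -/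
open Finset Real

/-- The {k}-domination number: the smallest weight of a function f : V → {0,1,...,k}
whose sum over every closed neighbourhood is at least k. -/
noncomputable def braceKDomNum {V : Type*} [Fintype V] [DecidableEq V]
    (G : SimpleGraph V) [DecidableRel G.Adj] (k : ℕ) : ℕ :=
  sInf {w : ℕ | ∃ f : V → ℕ, (∀ v, f v ≤ k) ∧
    (∀ v, k ≤ ∑ u ∈ insert v (G.neighborFinset v), f u) ∧ w = ∑ v, f v}

lemma bk_choose (t : ℕ) : ∀ j : ℕ, j ≤ (t + j).choose (t + 1) := by
  intro j
  induction j with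
  | zero => simp
  | succ j ih =>
    have h : (t + (j + 1)).choose (t + 1) = (t + j).choose t + (t + j).choose (t + 1) :=
      Nat.choose_succ_succ (t + j) t
    have h2 : 0 < (t + j).choose t := Nat.choose_pos (by omega)
    omega

lemma bk_choose' (t y : ℕ) : y - t ≤ y.choose (t + 1) := by
  rcases Nat.lt_or_ge y t with h | h
  · have : y - t = 0 := by omega
    omega
  · obtain ⟨j, rfl⟩ := Nat.exists_eq_add_of_le h
    have := bk_choose t j
    simpa using this

/-- The product weight of a subset. -/
noncomputable def bkW {α : Type*} [Fintype α] [DecidableEq α] (q : ℝ) (U : Finset α) : ℝ :=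
  (∏ _i ∈ U, q) * ∏ _i ∈ univ \ U, (1 - q)

lemma bkW_nonneg {α : Type*} [Fintype α] [DecidableEq α] (q : ℝ) (h0 : 0 ≤ q) (h1 : q ≤ 1)
    (U : Finset α) : 0 ≤ bkW q U :=
  mul_nonneg (prod_nonneg fun _ _ => h0) (prod_nonneg fun _ _ => sub_nonneg.2 h1)

lemma bkW_sum {α : Type*} [Fintype α] [DecidableEq α] (q : ℝ) (A : Finset α) :
    ∑ U : Finset α, bkW q U * (if A ⊆ U then 1 else 0) = q ^ #A := by
  have h := Finset.prod_add (fun _ : α => q) (fun i => if i ∈ A then 0 else (1 - q)) univ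
  have h2 : ∏ i : α, (q + if i ∈ A then 0 else (1 - q)) = q ^ #A := by
    have : ∀ i : α, (q + if i ∈ A then 0 else (1 - q)) = if i ∈ A then q else 1 := by
      intro i; split_ifs <;> ring
    simp only [this]
    rw [Finset.prod_ite_mem]
    simp
  rw [← h2, h, Finset.powerset_univ]
  refine Finset.sum_congr rfl fun U _ => ?_
  unfold bkW
  rw [mul_assoc]
  congr 1
  split_ifs with hA
  · rw [mul_one]
    refine Finset.prod_congr rfl fun i hi => ?_
    have : i ∉ A := fun hi' => (mem_sdiff.1 hi).2 (hA hi')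
    simp [this]
  · obtain ⟨i, hi, hi'⟩ := Finset.not_subset.1 hA
    rw [mul_zero, eq_comm]
    exact Finset.prod_eq_zero (i := i) (by simp [hi']) (by simp [hi])

lemma bk_pointwise {V : Type*} [Fintype V] [DecidableEq V]
    (G : SimpleGraph V) [DecidableRel G.Adj] (k r t d : ℕ) (hrk : r ≤ k)
    (hm : d * r = k + t) (N : V → Finset V)
    (hN : ∀ v, N v ⊆ insert v (G.neighborFinset v)) (hc : ∀ v, #(N v) = d)
    (U : Finset (V × Fin r)) :
    braceKDomNum G k ≤ (∑ x : V × Fin r, if x ∈ U then 0 else 1) +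
      ∑ v, ∑ A ∈ powersetCard (t + 1) (N v ×ˢ (univ : Finset (Fin r))),
        if A ⊆ U then 1 else 0 := by
  set f : V → ℕ := fun v => ∑ i : Fin r, if (v, i) ∈ U then 0 else 1 with hf
  set g : V → ℕ := fun v => f v + (k - ∑ u ∈ insert v (G.neighborFinset v), f u) with hg
  have hfr : ∀ v, f v ≤ r := by
    intro v
    calc f v ≤ ∑ i : Fin r, 1 := by
          refine Finset.sum_le_sum fun i _ => ?_
          split_ifs <;> simp
      _ = r := by simp
  have hfN : ∀ v, f v ≤ ∑ u ∈ insert v (G.neighborFinset v), f u := fun v =>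
    Finset.single_le_sum (f := f) (fun _ _ => Nat.zero_le _) (mem_insert_self _ _)
  have h1 : braceKDomNum G k ≤ ∑ v, g v := by
    refine Nat.sInf_le ⟨g, fun v => ?_, fun v => ?_, rfl⟩
    · have := hfr v
      have := hfN v
      simp only [hg]
      omega
    · rw [Finset.sum_insert (by simp)]
      have h3 : ∑ u ∈ G.neighborFinset v, f u ≤ ∑ u ∈ G.neighborFinset v, g u :=
        Finset.sum_le_sum fun u _ => Nat.le_add_right _ _
      have h4 : g v = f v + (k - ∑ u ∈ insert v (G.neighborFinset v), f u) := rfl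
      rw [Finset.sum_insert (by simp)] at h4
      omega
  refine h1.trans ?_
  simp only [hg]
  rw [Finset.sum_add_distrib, Fintype.sum_prod_type]
  refine Nat.add_le_add le_rfl (Finset.sum_le_sum fun v _ => ?_)
  set C := N v ×ˢ (univ : Finset (Fin r)) with hC
  have hCc : #C = k + t := by rw [hC, card_product, hc]; simpa using hm
  have h5 : ∑ A ∈ powersetCard (t + 1) C, (if A ⊆ U then 1 else 0)
      = (#(C ∩ U)).choose (t + 1) := by
    rw [← card_powersetCard, ← Finset.card_filter]
    congr 1
    ext A
    simp only [mem_filter, mem_powersetCard, subset_inter_iff]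
    tauto
  rw [h5]
  refine le_trans ?_ (bk_choose' t _)
  have h6 : ∑ u ∈ N v, f u ≤ ∑ u ∈ insert v (G.neighborFinset v), f u :=
    Finset.sum_le_sum_of_subset (hN v)
  have h7 : ∑ u ∈ N v, f u = #(C \ U) := by
    simp only [hf]
    rw [← Finset.sum_product', ← hC, ← Finset.filter_notMem_eq_sdiff, Finset.card_filter]
    refine Finset.sum_congr rfl fun x _ => ?_
    by_cases hx : x ∈ U <;> simp [hx]
  have h8 := Finset.card_inter_add_card_sdiff C U
  omega

lemma bk_avg {V : Type*} [Fintype V] [DecidableEq V]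
    (G : SimpleGraph V) [DecidableRel G.Adj] (k r t d : ℕ) (hrk : r ≤ k)
    (hm : d * r = k + t) (hd : ∀ v, d ≤ G.degree v + 1) (q : ℝ) (h0 : 0 ≤ q) (h1 : q ≤ 1) :
    (braceKDomNum G k : ℝ) ≤ (Fintype.card V : ℝ) *
      (r * (1 - q) + ((d * r).choose (t + 1) : ℕ) * q ^ (t + 1)) := by
  have hex : ∀ v, ∃ S ⊆ insert v (G.neighborFinset v), #S = d := by
    intro v
    apply Finset.exists_subset_card_eq
    rw [card_insert_of_notMem (by simp)]
    simpa using hd v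
  choose N hN hc using hex
  have hone : ∑ U : Finset (V × Fin r), bkW q U = 1 := by
    simpa using bkW_sum q (∅ : Finset (V × Fin r))
  have key : (braceKDomNum G k : ℝ) ≤ ∑ U : Finset (V × Fin r), bkW q U *
      ((∑ x : V × Fin r, (1 - if {x} ⊆ U then (1:ℝ) else 0)) +
      ∑ v, ∑ A ∈ powersetCard (t + 1) (N v ×ˢ (univ : Finset (Fin r))),
        if A ⊆ U then (1:ℝ) else 0) := by
    calc (braceKDomNum G k : ℝ) = ∑ U : Finset (V × Fin r), bkW q U * (braceKDomNum G k : ℝ) := by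
          rw [← Finset.sum_mul, hone, one_mul]
      _ ≤ _ := by
          refine Finset.sum_le_sum fun U _ => mul_le_mul_of_nonneg_left ?_ (bkW_nonneg q h0 h1 U)
          have h := bk_pointwise G k r t d hrk hm N hN hc U
          have h' : (braceKDomNum G k : ℝ) ≤ _ := Nat.cast_le.2 h
          refine h'.trans (le_of_eq ?_)
          push_cast
          congr 1
          refine Finset.sum_congr rfl fun x _ => ?_
          by_cases hx : x ∈ U <;> simp [hx]
  refine key.trans (le_of_eq ?_)
  simp only [mul_add, Finset.sum_add_distrib, Finset.mul_sum]
  congr 1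
  · rw [Finset.sum_comm]
    simp only [mul_sub, Finset.sum_sub_distrib, mul_one, hone, bkW_sum]
    simp
    ring
  · rw [Finset.sum_comm]
    have : ∀ v ∈ (univ : Finset V), ∑ U : Finset (V × Fin r),
        ∑ A ∈ powersetCard (t + 1) (N v ×ˢ (univ : Finset (Fin r))),
          bkW q U * (if A ⊆ U then (1:ℝ) else 0)
        = ((d * r).choose (t + 1) : ℕ) * q ^ (t + 1) := by
      intro v _
      rw [Finset.sum_comm]
      simp only [bkW_sum]
      rw [Finset.sum_congr rfl (g := fun _ => q ^ (t + 1))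
        (fun A hA => by rw [(mem_powersetCard.1 hA).2])]
      rw [Finset.sum_const, card_powersetCard, card_product, hc]
      simp
    rw [Finset.sum_congr rfl this]
    simp

theorem braceK_domination_bound
    {V : Type*} [Fintype V] [DecidableEq V]
    (G : SimpleGraph V) [DecidableRel G.Adj]
    (n : ℕ) (hn : n = Fintype.card V)
    (δ : ℕ) (hδ : δ = G.minDegree)
    (hδ0 : 0 < δ)
    (k : ℕ) (hk : 1 ≤ k)
    (r : ℕ) (hr : r = k / (δ + 1) + 1)
    (θ : ℝ) (hθ : θ = ((δ : ℝ) + 1) * r - k)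
    (ρ : ℝ) (hρ : ρ = 1 / θ)
    (B : ℝ) (hB : B = (((δ + 1) * r).choose (k - 1) : ℕ)) :
    (braceKDomNum G k : ℝ) ≤
      (1 - ((r : ℝ) * ρ) ^ ρ / ((1 + ρ) ^ (1 + ρ) * B ^ ρ)) * ((r : ℝ) * n) := by
  have hlt : k < (δ + 1) * r := by
    rw [hr]; exact Nat.lt_mul_div_succ k (by omega)
  obtain ⟨t, ht⟩ := Nat.exists_eq_add_of_le hlt.le
  have ht0 : 0 < t := by omega
  have hrk : r ≤ k := by
    rw [hr]
    exact Nat.succ_le_of_lt (Nat.div_lt_self (by omega) (by omega))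
  have hr0 : 0 < r := by rw [hr]; exact Nat.succ_pos _
  have hθt : θ = t := by
    have : (((δ + 1) * r : ℕ) : ℝ) = ((k + t : ℕ) : ℝ) := by rw [ht]
    push_cast at this
    rw [hθ, this]; ring
  have hch : ((δ + 1) * r).choose (k - 1) = ((δ + 1) * r).choose (t + 1) := by
    apply Nat.choose_symm_of_eq_add
    omega
  have hBk : r ≤ ((δ + 1) * r).choose (t + 1) := by
    have := bk_choose' t ((δ + 1) * r)
    omega
  rw [hch] at hB
  have hBr : (r : ℝ) ≤ B := by rw [hB]; exact_mod_cast hBk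
  have hr0' : (0:ℝ) < r := by exact_mod_cast hr0
  have hB0 : 0 < B := hr0'.trans_le hBr
  have hT : (0:ℝ) < t := by exact_mod_cast ht0
  have hρ0 : 0 < ρ := by rw [hρ, hθt]; positivity
  have hρt : ρ * t = 1 := by rw [hρ, hθt]; field_simp
  set a : ℝ := r * ρ / ((1 + ρ) * B) with ha
  have ha0 : 0 ≤ a := by positivity
  have ha1 : a ≤ 1 := by
    rw [ha, div_le_one (by positivity)]
    nlinarith
  have hq0 : 0 ≤ a ^ ρ := rpow_nonneg ha0 _
  have hq1 : a ^ ρ ≤ 1 := rpow_le_one ha0 ha1 hρ0.le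
  have hqt : (a ^ ρ) ^ t = a := by
    rw [← rpow_natCast, ← rpow_mul ha0, hρt, rpow_one]
  have hmain := bk_avg G k r t (δ + 1) hrk ht
    (fun v => by have := G.minDegree_le_degree v; omega) (a ^ ρ) hq0 hq1
  rw [← hB, ← hn] at hmain
  refine hmain.trans (le_of_eq ?_)
  have e1 : ((r : ℝ) * ρ) ^ ρ / ((1 + ρ) ^ (1 + ρ) * B ^ ρ) = a ^ ρ / (1 + ρ) := by
    rw [ha, div_rpow (by positivity) (by positivity), mul_rpow (by positivity) hB0.le,
      rpow_add (by positivity), rpow_one]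
    field_simp
  rw [e1, pow_succ, hqt]
  generalize a ^ ρ = q
  rw [ha]
  field_simp
  ring
end

section
/- For any finite simple graph G of order n with minimum degree δ > 0 and any integer k ≥ 1, with r = ⌊k/(δ+1)⌋ + 1, θ = (δ+1)r − k and B_{k−1} = C((δ+1)r, k−1), the {k}-domination number satisfies γ_{{k}}(G) ≤ ((ln(θ+1) + ln B_{k−1} − ln r + 1)/(θ+1)) · r·n. -/
open Finset Real

/-- Weight of a subset under independent sampling with probability `p`. -/
noncomputable def sampWt {ι : Type*} [Fintype ι] [DecidableEq ι] (p : ℝ) (S : Finset ι) : ℝ :=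
  (∏ _i ∈ S, p) * ∏ _i ∈ (univ \ S), (1 - p)

lemma sampWt_nonneg {ι : Type*} [Fintype ι] [DecidableEq ι] {p : ℝ} (h0 : 0 ≤ p) (h1 : p ≤ 1)
    (S : Finset ι) : 0 ≤ sampWt p S := by
  unfold sampWt
  exact mul_nonneg (prod_nonneg fun _ _ => h0) (prod_nonneg fun _ _ => by linarith)

lemma sampWt_disj {ι : Type*} [Fintype ι] [DecidableEq ι] (p : ℝ) (T : Finset ι) :
    ∑ S : Finset ι, (if Disjoint T S then sampWt p S else 0) = (1 - p) ^ #T := by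
  have h := Finset.prod_add (fun i => if i ∈ T then (0 : ℝ) else p) (fun _ => 1 - p)
    (univ : Finset ι)
  have h2 : ∏ i : ι, ((if i ∈ T then (0 : ℝ) else p) + (1 - p)) = (1 - p) ^ #T := by
    have : ∀ i : ι, ((if i ∈ T then (0 : ℝ) else p) + (1 - p)) = if i ∈ T then 1 - p else 1 := by
      intro i; split_ifs <;> ring
    simp_rw [this]
    rw [Finset.prod_ite_mem]
    simp
  rw [← h2, h, Finset.powerset_univ]
  refine Finset.sum_congr rfl fun S _ => ?_
  split_ifs with hd
  · unfold sampWt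
    congr 1
    refine Finset.prod_congr rfl fun i hi => ?_
    rw [if_neg]
    exact fun hT => (Finset.disjoint_left.mp hd hT) hi
  · obtain ⟨i, hT, hS⟩ := Finset.not_disjoint_iff.mp hd
    rw [Finset.prod_eq_zero hS (by simp [hT]), zero_mul]

lemma sampWt_total {ι : Type*} [Fintype ι] [DecidableEq ι] (p : ℝ) :
    ∑ S : Finset ι, sampWt p S = 1 := by
  have := sampWt_disj p (∅ : Finset ι)
  simpa using this

lemma sampWt_card {ι : Type*} [Fintype ι] [DecidableEq ι] (p : ℝ) :
    ∑ S : Finset ι, sampWt p S * (#S : ℝ) = Fintype.card ι * p := by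
  have h1 : ∀ S : Finset ι, sampWt p S * (#S : ℝ)
      = ∑ i : ι, (sampWt p S - if Disjoint {i} S then sampWt p S else 0) := by
    intro S
    have : ∀ i : ι, (sampWt p S - if Disjoint {i} S then sampWt p S else 0)
        = if i ∈ S then sampWt p S else 0 := by
      intro i
      by_cases hi : i ∈ S <;> simp [hi]
    simp_rw [this]
    rw [Finset.sum_ite_mem]
    simp [mul_comm]
  simp_rw [h1]
  rw [Finset.sum_comm]
  simp_rw [Finset.sum_sub_distrib, sampWt_total, sampWt_disj]
  simp

lemma exists_sample {ι V : Type*} [Fintype ι] [DecidableEq ι] [Fintype V]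
    {p : ℝ} (h0 : 0 ≤ p) (h1 : p ≤ 1) (t : ℕ) (F : V → Finset (Finset ι)) (c : ℕ)
    (hF : ∀ v, ∀ T ∈ F v, #T = t) (hc : ∀ v, #(F v) = c) :
    ∃ S : Finset ι, (#S : ℝ) + ∑ v, (#{T ∈ F v | Disjoint T S} : ℝ)
      ≤ Fintype.card ι * p + Fintype.card V * (c * (1 - p) ^ t) := by
  by_contra! hcon
  set R : ℝ := Fintype.card ι * p + Fintype.card V * (c * (1 - p) ^ t) with hR
  have hE : ∑ S : Finset ι, sampWt p S * ((#S : ℝ) + ∑ v, (#{T ∈ F v | Disjoint T S} : ℝ)) = R := by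
    simp_rw [mul_add, Finset.sum_add_distrib, sampWt_card]
    rw [hR]
    congr 1
    simp_rw [Finset.mul_sum]
    rw [Finset.sum_comm]
    have : ∀ v : V, ∑ S : Finset ι, sampWt p S * (#{T ∈ F v | Disjoint T S} : ℝ)
        = c * (1 - p) ^ t := by
      intro v
      have : ∀ S : Finset ι, sampWt p S * (#{T ∈ F v | Disjoint T S} : ℝ)
          = ∑ T ∈ F v, if Disjoint T S then sampWt p S else 0 := by
        intro S
        rw [← Finset.sum_filter]
        simp [mul_comm]
      simp_rw [this]
      rw [Finset.sum_comm]
      simp_rw [sampWt_disj]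
      rw [Finset.sum_congr rfl (fun T hT => by rw [hF v T hT])]
      simp [hc]
    simp_rw [this]
    simp
  have hT := sampWt_total (ι := ι) p
  have hle : ∑ S : Finset ι, sampWt p S * R < ∑ S : Finset ι, sampWt p S *
      ((#S : ℝ) + ∑ v, (#{T ∈ F v | Disjoint T S} : ℝ)) := by
    apply Finset.sum_lt_sum
    · intro S _
      exact mul_le_mul_of_nonneg_left (hcon S).le (sampWt_nonneg h0 h1 S)
    · by_contra! hh
      have : ∀ S : Finset ι, sampWt p S ≤ 0 := by
        intro S
        by_contra! hp
        have := hh S (mem_univ _)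
        have := mul_lt_mul_of_pos_left (hcon S) hp
        linarith
      have := Finset.sum_nonpos (fun S (_ : S ∈ (univ : Finset (Finset ι))) => this S)
      linarith
  rw [← Finset.sum_mul, hT, one_mul, hE] at hle
  exact lt_irrefl _ hle

lemma choose_ge (t j : ℕ) (ht : 1 ≤ t) : j + 1 ≤ (t + j).choose t := by
  have h1 : (t + j).choose t = (t + j).choose j := Nat.choose_symm_add
  have h2 : (1 + j).choose j ≤ (t + j).choose j := Nat.choose_le_choose j (by omega)
  have h3 : (1 + j).choose j = j + 1 := by rw [add_comm]; exact Nat.choose_succ_self_right j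
  omega

lemma braceK_le {V : Type*} [Fintype V] [DecidableEq V]
    (G : SimpleGraph V) [DecidableRel G.Adj] (k : ℕ) (f : V → ℕ) (h1 : ∀ v, f v ≤ k)
    (h2 : ∀ v, k ≤ ∑ u ∈ insert v (G.neighborFinset v), f u) :
    braceKDomNum G k ≤ ∑ v, f v :=
  Nat.sInf_le ⟨f, h1, h2, rfl⟩

lemma braceK_prob {V : Type*} [Fintype V] [DecidableEq V]
    (G : SimpleGraph V) [DecidableRel G.Adj] (k r t N : ℕ) (hk : 1 ≤ k) (hrk : r ≤ k)
    (hN : N = (G.minDegree + 1) * r) (ht : t + (k - 1) = N) (ht1 : 1 ≤ t)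
    {p : ℝ} (h0 : 0 ≤ p) (h1 : p ≤ 1) :
    (braceKDomNum G k : ℝ) ≤ (Fintype.card V) * (r * p + (N.choose (k - 1)) * (1 - p) ^ t) := by
  have hex : ∀ v : V, ∃ M : Finset V, {v} ⊆ M ∧ M ⊆ insert v (G.neighborFinset v) ∧
      #M = G.minDegree + 1 := by
    intro v
    apply Finset.exists_subsuperset_card_eq
    · simp
    · simp
    · rw [Finset.card_insert_of_notMem (by simp), G.card_neighborFinset_eq_degree]
      have := G.minDegree_le_degree v
      omega
  choose M hM1 hM2 hM3 using hex
  let A : V → Finset (V × Fin r) := fun v => M v ×ˢ univ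
  have hA : ∀ v, #(A v) = N := by
    intro v; simp [A, hM3, hN]
  obtain ⟨S, hS⟩ := exists_sample (ι := V × Fin r) h0 h1 t (fun v => (A v).powersetCard t)
    (N.choose t) (fun v T hT => (Finset.mem_powersetCard.mp hT).2)
    (fun v => by rw [Finset.card_powersetCard, hA])
  have hch : N.choose t = N.choose (k - 1) := by
    rw [← ht]; exact Nat.choose_symm_add
  let f : V → ℕ := fun u => #{x ∈ S | x.1 = u}
  have hfr : ∀ u, f u ≤ r := by
    intro u
    calc f u ≤ #(({u} : Finset V) ×ˢ (univ : Finset (Fin r))) := by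
          apply Finset.card_le_card
          intro x hx
          simp only [mem_filter] at hx
          simp only [mem_product, mem_singleton, mem_univ, and_true]
          exact hx.2
      _ = r := by simp
  have hfM : ∀ v, ∑ u ∈ M v, f u = #(A v ∩ S) := by
    intro v
    rw [Finset.card_eq_sum_card_fiberwise (f := Prod.fst) (t := M v)]
    · refine Finset.sum_congr rfl fun u hu => ?_
      refine congrArg Finset.card ?_
      ext x
      simp only [A, mem_filter, mem_inter, mem_product, mem_univ, and_true]
      constructor
      · rintro ⟨a, b⟩; exact ⟨⟨b ▸ hu, a⟩, b⟩
      · rintro ⟨⟨_, a⟩, b⟩; exact ⟨a, b⟩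
    · intro x hx
      simp only [A, coe_inter, Set.mem_inter_iff, mem_coe, mem_product] at hx
      exact hx.1.1
  have hfS : ∑ u, f u = #S := by
    rw [Finset.card_eq_sum_card_fiberwise (f := Prod.fst) (t := univ)]
    intro x _; simp
  let d : V → ℕ := fun v => k - ∑ u ∈ M v, f u
  have hd : ∀ v, d v ≤ #{T ∈ (A v).powersetCard t | Disjoint T S} := by
    intro v
    have he : {T ∈ (A v).powersetCard t | Disjoint T S} = (A v \ S).powersetCard t := by
      ext T
      simp only [mem_filter, mem_powersetCard, Finset.subset_sdiff]
      tauto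
    rw [he, Finset.card_powersetCard]
    have hc := Finset.card_inter_add_card_sdiff (A v) S
    rw [hA] at hc
    simp only [d, hfM]
    by_cases hlt : #(A v ∩ S) < k
    · have := choose_ge t (k - 1 - #(A v ∩ S)) ht1
      have h3 : t + (k - 1 - #(A v ∩ S)) = #(A v \ S) := by omega
      rw [h3] at this
      omega
    · omega
  have hb := braceK_le G k (fun v => f v + d v) (by
      intro v
      have : f v ≤ ∑ u ∈ M v, f u :=
        Finset.single_le_sum (f := f) (fun _ _ => Nat.zero_le _) (hM1 v (by simp))
      have := hfr v
      simp only [d]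
      omega) (by
      intro v
      have ha : ∑ u ∈ M v, f u ≤ ∑ u ∈ insert v (G.neighborFinset v), f u :=
        Finset.sum_le_sum_of_subset (hM2 v)
      have hb : d v ≤ ∑ u ∈ insert v (G.neighborFinset v), d u :=
        Finset.single_le_sum (f := d) (fun _ _ => Nat.zero_le _) (by simp)
      rw [Finset.sum_add_distrib]
      have : k ≤ ∑ u ∈ M v, f u + d v := by simp only [d]; omega
      omega)
  rw [Finset.sum_add_distrib, hfS] at hb
  have hb2 : braceKDomNum G k ≤ #S + ∑ v, #{T ∈ (A v).powersetCard t | Disjoint T S} :=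
    hb.trans (Nat.add_le_add_left (Finset.sum_le_sum fun v _ => hd v) _)
  have hb3 : (braceKDomNum G k : ℝ) ≤
      #S + ∑ v, (#{T ∈ (A v).powersetCard t | Disjoint T S} : ℝ) := by exact_mod_cast hb2
  refine (hb3.trans hS).trans (le_of_eq ?_)
  rw [hch, Fintype.card_prod, Fintype.card_fin]
  push_cast
  ring

theorem braceK_domination_log_bound
    {V : Type*} [Fintype V] [DecidableEq V]
    (G : SimpleGraph V) [DecidableRel G.Adj]
    (n : ℕ) (hn : n = Fintype.card V)
    (δ : ℕ) (hδ : δ = G.minDegree)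
    (hδ0 : 0 < δ)
    (k : ℕ) (hk : 1 ≤ k)
    (r : ℕ) (hr : r = k / (δ + 1) + 1)
    (θ : ℝ) (hθ : θ = ((δ : ℝ) + 1) * r - k)
    (B : ℝ) (hB : B = (((δ + 1) * r).choose (k - 1) : ℕ)) :
    (braceKDomNum G k : ℝ) ≤
      ((Real.log (θ + 1) + Real.log B - Real.log r + 1) / (θ + 1)) * ((r : ℝ) * n) := by
  have hr1 : 1 ≤ r := by rw [hr]; exact Nat.le_add_left 1 _
  have hNk : k < (δ + 1) * r := by
    rw [hr]; exact Nat.lt_mul_div_succ k (by omega)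
  have hrk : r ≤ k := by
    rw [hr]
    have : k / (δ + 1) < k := Nat.div_lt_self (by omega) (by omega)
    omega
  obtain ⟨N, hN⟩ : ∃ N, N = (δ + 1) * r := ⟨_, rfl⟩
  rw [← hN] at hB hNk
  obtain ⟨t, ht⟩ : ∃ t, t + (k - 1) = N := ⟨N - (k - 1), by omega⟩
  have ht2 : 2 ≤ t := by omega
  have hθt : θ + 1 = t := by
    have e1 : (N : ℝ) = ((δ : ℝ) + 1) * r := by rw [hN]; push_cast; ring
    have e2 : t + k = N + 1 := by omega
    have e3 : (t : ℝ) + k = N + 1 := by exact_mod_cast e2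
    rw [hθ, ← e1]; linarith
  have hrN : r ≤ N := by rw [hN]; exact Nat.le_mul_of_pos_left r (by omega)
  have hBN : r ≤ N.choose (k - 1) := by
    rcases Nat.lt_or_ge k 2 with h | h
    · have : k - 1 = 0 := by omega
      rw [this, Nat.choose_zero_right]; omega
    · have := choose_ge (k - 1) t (by omega)
      have h2 := choose_ge t (k - 1) (by omega)
      have h3 : N ≤ N.choose (k - 1) := by
        obtain ⟨m, hm⟩ : ∃ m, k - 1 = m + 1 := ⟨k - 2, by omega⟩
        rw [hm]
        obtain ⟨s, hs⟩ : ∃ s, N = m + 1 + (s + 1) := ⟨N - m - 2, by omega⟩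
        rw [hs]
        have a1 := choose_ge (m + 1) s (by omega)
        have a2 : (m + 1 + s).choose m ≥ m + 1 := by
          have b1 : (m + 1 + s).choose m ≥ (m + 1).choose m := Nat.choose_le_choose m (by omega)
          rw [Nat.choose_succ_self_right] at b1
          exact b1
        have a3 := Nat.choose_succ_succ (m + 1 + s) m
        simp only [Nat.succ_eq_add_one] at a3
        rw [← add_assoc, a3]
        omega
      omega
  rw [hθt]
  have hrR : (1 : ℝ) ≤ r := by exact_mod_cast hr1
  have htR : (2 : ℝ) ≤ t := by exact_mod_cast ht2
  have hBr : (r : ℝ) ≤ B := by rw [hB]; exact_mod_cast hBN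
  have hlogB : Real.log r ≤ Real.log B := Real.log_le_log (by linarith) hBr
  have hlogt : 0 ≤ Real.log t := Real.log_nonneg (by linarith)
  set L : ℝ := Real.log t + Real.log B - Real.log r with hL
  have hn0 : (0 : ℝ) ≤ n := Nat.cast_nonneg n
  by_cases hp : L / t ≤ 1
  · have hp0 : 0 ≤ L / t := div_nonneg (by linarith) (by linarith)
    have key := braceK_prob G k r t N hk hrk (by rw [hN, hδ]) ht (by omega) hp0 hp
    rw [← hn, ← hB] at key
    refine key.trans ?_
    have hexp : (1 - L / t) ^ t ≤ r / (t * B) := by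
      calc (1 - L / t) ^ t ≤ (Real.exp (-(L / t))) ^ t :=
            pow_le_pow_left₀ (by linarith) (Real.one_sub_le_exp_neg _) _
        _ = Real.exp (-L) := by
            rw [← Real.exp_nat_mul]; congr 1; field_simp
        _ = r / (t * B) := by
            have : -L = Real.log (r / (t * B)) := by
              rw [Real.log_div (by linarith) (by nlinarith), Real.log_mul (by linarith) (by linarith), hL]
              ring
            rw [this, Real.exp_log]
            have : 0 < (t : ℝ) * B := mul_pos (by linarith) (by linarith)
            positivity
    have hBpos : 0 < B := by linarith
    have htpos : (0 : ℝ) < t := by linarith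
    calc (n : ℝ) * (r * (L / t) + B * (1 - L / t) ^ t)
        ≤ n * (r * (L / t) + B * (r / (t * B))) := by gcongr
      _ = (L + 1) / t * (r * n) := by field_simp
  · push Not at hp
    have hb := braceK_le G k (fun _ => r) (fun _ => hrk) (by
      intro v
      rw [Finset.sum_const, Finset.card_insert_of_notMem (by simp),
        G.card_neighborFinset_eq_degree, smul_eq_mul]
      have h1 := G.minDegree_le_degree v
      have h2 : (δ + 1) * r ≤ (G.degree v + 1) * r := Nat.mul_le_mul_right r (by omega)
      omega)
    rw [Finset.sum_const, Finset.card_univ, ← hn, smul_eq_mul] at hb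
    have hb2 : (braceKDomNum G k : ℝ) ≤ n * r := by exact_mod_cast hb
    have h1 : 1 ≤ (L + 1) / t := by
      refine hp.le.trans ?_
      gcongr
      linarith
    have h2 : 0 ≤ (r : ℝ) * n := by positivity
    nlinarith
end

section
/- For any finite simple graph G of order n with minimum degree δ ≥ k, where k ≥ 1 is an integer, writing δ̂ = δ − k + 1 and b_{k−1} = C(δ, k−1), the k-domination number satisfies both γ_k(G) ≤ (1 − δ̂ / ((1+δ̂)^{1+1/δ̂} · b_{k−1}^{1/δ̂})) · n and γ_k(G) ≤ ((ln(δ − k + 2) + ln b_{k−1} + 1)/(δ − k + 2)) · n. -/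
open Finset Real

/-- The k-domination number: the minimum cardinality of a set X such that every vertex
not in X has at least k neighbours in X. -/
noncomputable def kDomNum {V : Type*} [Fintype V] [DecidableEq V]
    (G : SimpleGraph V) [DecidableRel G.Adj] (k : ℕ) : ℕ :=
  sInf {m : ℕ | ∃ X : Finset V,
    (∀ v, v ∉ X → k ≤ (G.neighborFinset v ∩ X).card) ∧ m = X.card}

lemma weight_sum {V : Type*} [Fintype V] [DecidableEq V] (q : ℝ) (T : Finset V) :
    ∑ C ∈ (univ : Finset V).powerset,
      ((∏ _i ∈ C, q) * ∏ _i ∈ univ \ C, (1 - q)) * (if T ⊆ C then (1 : ℝ) else 0)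
      = q ^ T.card := by
  have h := Finset.prod_add (fun _ : V => q) (fun i => if i ∈ T then (0 : ℝ) else 1 - q) univ
  have h1 : ∏ i : V, (q + if i ∈ T then (0 : ℝ) else 1 - q) = q ^ T.card := by
    have : ∀ i : V, (q + if i ∈ T then (0 : ℝ) else 1 - q) = if i ∈ T then q else 1 := by
      intro i; split_ifs <;> ring
    simp only [this]
    rw [Finset.prod_ite_mem]
    simp
  rw [← h1, h]
  refine Finset.sum_congr rfl fun C _ => ?_
  rw [mul_assoc]
  congr 1
  by_cases hT : T ⊆ C
  · rw [if_pos hT, mul_one]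
    refine Finset.prod_congr rfl fun i hi => ?_
    rw [if_neg]
    intro hi'
    exact (Finset.mem_sdiff.1 hi).2 (hT hi')
  · rw [if_neg hT, mul_zero]
    obtain ⟨x, hx, hxC⟩ := Finset.not_subset.1 hT
    symm
    apply Finset.prod_eq_zero (i := x)
    · simp [hxC]
    · simp [hx]

lemma kDomNum_le_card {V : Type*} [Fintype V] [DecidableEq V]
    (G : SimpleGraph V) [DecidableRel G.Adj] (k : ℕ) (X : Finset V)
    (h : ∀ v, v ∉ X → k ≤ (G.neighborFinset v ∩ X).card) : kDomNum G k ≤ X.card :=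
  Nat.sInf_le ⟨X, h, rfl⟩

lemma pointwise {V : Type*} [Fintype V] [DecidableEq V]
    (G : SimpleGraph V) [DecidableRel G.Adj] (δ k : ℕ) (hk : 1 ≤ k) (hkδ : k ≤ δ)
    (N : V → Finset V) (hN : ∀ v, N v ⊆ G.neighborFinset v) (hNc : ∀ v, (N v).card = δ)
    (C : Finset V) :
    (kDomNum G k : ℝ) ≤ (Fintype.card V : ℝ) - (∑ v : V, if {v} ⊆ C then (1 : ℝ) else 0)
      + ∑ v : V, ∑ S ∈ (N v).powersetCard (δ - k + 1), if insert v S ⊆ C then (1 : ℝ) else 0 := by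
  set B : Finset V := C.filter (fun v => (G.neighborFinset v ∩ Cᶜ).card < k) with hB
  have h1 : kDomNum G k ≤ (Cᶜ ∪ B).card := by
    apply kDomNum_le_card
    intro v hv
    simp only [mem_union, mem_compl, not_or, not_not, hB, mem_filter, not_and, not_lt] at hv
    exact (hv.2 hv.1).trans
      (Finset.card_le_card (Finset.inter_subset_inter_left Finset.subset_union_left))
  have h2 : (kDomNum G k : ℝ) ≤ (Cᶜ.card : ℝ) + B.card := by
    exact_mod_cast h1.trans (Finset.card_union_le _ _)
  have h3 : (Cᶜ.card : ℝ) = (Fintype.card V : ℝ) - (∑ v : V, if {v} ⊆ C then (1 : ℝ) else 0) := by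
    rw [Finset.card_compl, Nat.cast_sub (Finset.card_le_univ C)]
    simp
  have h4 : (B.card : ℝ) ≤
      ∑ v : V, ∑ S ∈ (N v).powersetCard (δ - k + 1), if insert v S ⊆ C then (1 : ℝ) else 0 := by
    have : (B.card : ℝ) = ∑ v : V, if v ∈ B then (1 : ℝ) else 0 := by simp
    rw [this]
    refine Finset.sum_le_sum fun v _ => ?_
    have hnn : ∀ S ∈ (N v).powersetCard (δ - k + 1),
        (0 : ℝ) ≤ if insert v S ⊆ C then (1 : ℝ) else 0 := by
      intro S _; split_ifs <;> norm_num
    split_ifs with hv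
    · simp only [hB, mem_filter] at hv
      have hc : δ - k + 1 ≤ (N v ∩ C).card := by
        have e1 : (N v ∩ C).card + (N v ∩ Cᶜ).card = δ := by
          rw [← hNc v, ← Finset.card_inter_add_card_sdiff (N v) C, Finset.sdiff_eq_inter_compl]
        have e2 : (N v ∩ Cᶜ).card ≤ (G.neighborFinset v ∩ Cᶜ).card :=
          Finset.card_le_card (Finset.inter_subset_inter_right (hN v))
        omega
      obtain ⟨S, hS, hSc⟩ := Finset.exists_subset_card_eq hc
      have hSm : S ∈ (N v).powersetCard (δ - k + 1) :=
        Finset.mem_powersetCard.2 ⟨hS.trans Finset.inter_subset_left, hSc⟩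
      refine le_trans ?_ (Finset.single_le_sum hnn hSm)
      rw [if_pos]
      exact Finset.insert_subset hv.1 (hS.trans Finset.inter_subset_right)
    · exact Finset.sum_nonneg hnn
  linarith

lemma main_bound {V : Type*} [Fintype V] [DecidableEq V]
    (G : SimpleGraph V) [DecidableRel G.Adj] (δ k : ℕ) (hδ : δ = G.minDegree)
    (hk : 1 ≤ k) (hkδ : k ≤ δ) (q : ℝ) (hq0 : 0 ≤ q) (hq1 : q ≤ 1) :
    (kDomNum G k : ℝ) ≤
      (1 - q + (δ.choose (k - 1) : ℕ) * q ^ (δ - k + 1 + 1)) * Fintype.card V := by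
  have hex : ∀ v, ∃ N ⊆ G.neighborFinset v, N.card = δ := fun v => by
    apply Finset.exists_subset_card_eq
    rw [hδ, G.card_neighborFinset_eq_degree]
    exact G.minDegree_le_degree v
  choose N hN hNc using hex
  let w : Finset V → ℝ := fun C => (∏ _i ∈ C, q) * ∏ _i ∈ univ \ C, (1 - q)
  have hw : ∀ C, 0 ≤ w C := fun C => mul_nonneg
    (Finset.prod_nonneg fun _ _ => hq0) (Finset.prod_nonneg fun _ _ => by linarith)
  have hT : ∀ T : Finset V, ∑ C ∈ (univ : Finset V).powerset,
      w C * (if T ⊆ C then (1 : ℝ) else 0) = q ^ T.card := weight_sum q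
  have hw1 : ∑ C ∈ (univ : Finset V).powerset, w C = 1 := by
    simpa using hT ∅
  have hsum := Finset.sum_le_sum (s := (univ : Finset V).powerset) fun C _ =>
    mul_le_mul_of_nonneg_left (pointwise G δ k hk hkδ N hN hNc C) (hw C)
  rw [← Finset.sum_mul, hw1, one_mul] at hsum
  refine hsum.trans (le_of_eq ?_)
  simp only [mul_add, mul_sub, Finset.sum_add_distrib, Finset.sum_sub_distrib, Finset.mul_sum]
  rw [← Finset.sum_mul, hw1, Finset.sum_comm]
  have e1 : ∑ v : V, ∑ C ∈ (univ : Finset V).powerset,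
      w C * (if {v} ⊆ C then (1 : ℝ) else 0) = Fintype.card V * q := by
    rw [Finset.sum_congr rfl fun v _ => hT {v}]
    simp
  have e2 : ∑ C ∈ (univ : Finset V).powerset, ∑ v : V, ∑ S ∈ (N v).powersetCard (δ - k + 1),
      w C * (if insert v S ⊆ C then (1 : ℝ) else 0)
      = Fintype.card V * ((δ.choose (k - 1) : ℕ) * q ^ (δ - k + 1 + 1)) := by
    rw [Finset.sum_comm]
    have : ∀ v : V, ∑ C ∈ (univ : Finset V).powerset, ∑ S ∈ (N v).powersetCard (δ - k + 1),
      w C * (if insert v S ⊆ C then (1 : ℝ) else 0)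
        = (δ.choose (k - 1) : ℕ) * q ^ (δ - k + 1 + 1) := by
      intro v
      rw [Finset.sum_comm, Finset.sum_congr rfl fun S _ => hT (insert v S)]
      have : ∀ S ∈ (N v).powersetCard (δ - k + 1),
          q ^ (insert v S).card = q ^ (δ - k + 1 + 1) := by
        intro S hS
        rw [Finset.mem_powersetCard] at hS
        rw [Finset.card_insert_of_notMem, hS.2]
        intro hv
        have := hN v (hS.1 hv)
        simp at this
      rw [Finset.sum_congr rfl this, Finset.sum_const, Finset.card_powersetCard, hNc, nsmul_eq_mul]
      congr 2
      rw [← Nat.choose_symm (by omega : k - 1 ≤ δ)]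
      congr 1
      omega
    rw [Finset.sum_congr rfl fun v _ => this v]
    simp
  rw [e1, e2]
  ring

lemma kDomNum_le_order {V : Type*} [Fintype V] [DecidableEq V]
    (G : SimpleGraph V) [DecidableRel G.Adj] (k : ℕ) : kDomNum G k ≤ Fintype.card V :=
  kDomNum_le_card G k univ (by simp)

theorem k_domination_bounds
    {V : Type*} [Fintype V] [DecidableEq V]
    (G : SimpleGraph V) [DecidableRel G.Adj]
    (n : ℕ) (hn : n = Fintype.card V)
    (δ : ℕ) (hδ : δ = G.minDegree)
    (k : ℕ) (hk : 1 ≤ k) (hkδ : k ≤ δ)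
    (dh : ℝ) (hdh : dh = (δ : ℝ) - k + 1)
    (b : ℝ) (hb : b = (δ.choose (k - 1) : ℕ)) :
    (kDomNum G k : ℝ) ≤ (1 - dh / ((1 + dh) ^ (1 + 1 / dh) * b ^ (1 / dh))) * n ∧
    (kDomNum G k : ℝ) ≤
      ((Real.log ((δ : ℝ) - k + 2) + Real.log b + 1) / ((δ : ℝ) - k + 2)) * n := by
  have hmain := main_bound G δ k hδ hk hkδ
  rw [← hn, ← hb] at hmain
  have hd : dh = ((δ - k + 1 : ℕ) : ℝ) := by
    rw [hdh]; push_cast [Nat.cast_sub hkδ]; ring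
  have hd2 : (δ : ℝ) - k + 2 = 1 + dh := by rw [hdh]; ring
  have hb1 : 1 ≤ b := by
    rw [hb]; exact_mod_cast Nat.choose_pos (by omega : k - 1 ≤ δ)
  have hd1 : 1 ≤ dh := by rw [hd]; exact_mod_cast Nat.le_add_left 1 _
  generalize δ - k + 1 = d at hmain hd
  rw [hd2]
  have hn0 : (0 : ℝ) ≤ n := Nat.cast_nonneg n
  have hd0 : 0 < dh := by linarith
  have hb0 : 0 < b := by linarith
  constructor
  · set r : ℝ := ((1 + dh) * b) ^ (1 / dh) with hr
    have hr1 : 1 ≤ r := Real.one_le_rpow (by nlinarith) (by positivity)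
    have hr0 : 0 < r := by linarith
    have hrd : r ^ d = (1 + dh) * b := by
      rw [hr, ← Real.rpow_natCast, ← hd, ← Real.rpow_mul (by positivity), one_div,
        inv_mul_cancel₀ hd0.ne', Real.rpow_one]
    have e : (1 + dh) ^ (1 + 1 / dh) * b ^ (1 / dh) = (1 + dh) * r := by
      rw [Real.rpow_add (by positivity), Real.rpow_one, hr,
        Real.mul_rpow (by positivity) hb0.le, mul_assoc]
    rw [e]
    refine (hmain r⁻¹ (by positivity) (inv_le_one_of_one_le₀ hr1)).trans (le_of_eq ?_)
    congr 1
    rw [pow_succ, inv_pow, hrd]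
    field_simp
    ring
  · set p : ℝ := (Real.log (1 + dh) + Real.log b) / (1 + dh) with hp
    have hp0 : 0 ≤ p := div_nonneg
      (add_nonneg (Real.log_nonneg (by linarith)) (Real.log_nonneg hb1)) (by linarith)
    have e : (Real.log (1 + dh) + Real.log b + 1) / (1 + dh) = p + 1 / (1 + dh) := by
      rw [hp]; ring
    rw [e]
    rcases le_total p 1 with h | h
    · refine (hmain (1 - p) (by linarith) (by linarith)).trans ?_
      refine mul_le_mul_of_nonneg_right ?_ hn0
      have h1 : (1 - p) ^ (d + 1) ≤ Real.exp (-p) ^ (d + 1) :=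
        pow_le_pow_left₀ (by linarith) (by linarith [Real.add_one_le_exp (-p)]) _
      have h2 : Real.exp (-p) ^ (d + 1) = ((1 + dh) * b)⁻¹ := by
        rw [← Real.exp_nat_mul]
        have : ((d + 1 : ℕ) : ℝ) * -p = -Real.log ((1 + dh) * b) := by
          rw [Real.log_mul (by positivity) hb0.ne', hp]
          push_cast
          rw [← hd]
          field_simp
          ring
        rw [this, Real.exp_neg, Real.exp_log (by positivity)]
      rw [h2] at h1
      have h3 := mul_le_mul_of_nonneg_left h1 hb0.le
      have h4 : b * ((1 + dh) * b)⁻¹ = 1 / (1 + dh) := by field_simp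
      linarith
    · have h0 : (kDomNum G k : ℝ) ≤ n := by
        rw [hn]; exact_mod_cast kDomNum_le_order G k
      have : 0 ≤ 1 / (1 + dh) := by positivity
      nlinarith
end

section
/- For any finite simple graph G of order n with minimum degree δ ≥ 1, the total domination number satisfies γ_t(G) ≤ ((ln δ + 1)/δ) · n. -/
open Finset Real

/-- The total k-domination number: the minimum cardinality of a set X such that every
vertex has at least k neighbours in X. -/
noncomputable def totalKDomNum {V : Type*} [Fintype V] [DecidableEq V]
    (G : SimpleGraph V) [DecidableRel G.Adj] (k : ℕ) : ℕ :=
  sInf {m : ℕ | ∃ X : Finset V,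
    (∀ v, k ≤ (G.neighborFinset v ∩ X).card) ∧ m = X.card}

lemma exists_good_set {V : Type*} [DecidableEq V]
    (N : V → Finset V) (p : ℝ) (hp0 : 0 ≤ p) (hp1 : p ≤ 1) (S : Finset V) :
    ∀ T : Finset V, ∃ X : Finset V, X ⊆ S ∧
      (X.card : ℝ) + ((T.filter (fun v => N v ∩ X = ∅)).card : ℝ) ≤
        p * S.card + ∑ v ∈ T, (1 - p) ^ (N v ∩ S).card := by
  induction S using Finset.induction_on with
  | empty => intro T; exact ⟨∅, by simp, by simp⟩
  | insert a S ha ih =>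
    intro T
    have hadj : ∀ v ∈ T.filter (fun v => a ∈ N v),
        (1 - p) ^ (N v ∩ insert a S).card = (1 - p) * (1 - p) ^ (N v ∩ S).card := by
      intro v hv
      have h : a ∈ N v := (Finset.mem_filter.mp hv).2
      rw [Finset.inter_insert_of_mem h, Finset.card_insert_of_notMem (by simp [ha]), pow_succ']
    have hnadj : ∀ v ∈ T.filter (fun v => ¬ a ∈ N v),
        (1 - p) ^ (N v ∩ insert a S).card = (1 - p) ^ (N v ∩ S).card := by
      intro v hv
      rw [Finset.inter_insert_of_notMem (Finset.mem_filter.mp hv).2]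
    have e1 := Finset.sum_filter_add_sum_filter_not T (fun v => a ∈ N v)
      (fun v => (1 - p) ^ (N v ∩ insert a S).card)
    have e2 := Finset.sum_filter_add_sum_filter_not T (fun v => a ∈ N v)
      (fun v => (1 - p) ^ (N v ∩ S).card)
    rw [Finset.sum_congr rfl hadj, Finset.sum_congr rfl hnadj, ← Finset.mul_sum] at e1
    obtain ⟨X1, hX1, h1⟩ := ih T
    obtain ⟨X2, hX2, h2⟩ := ih (T.filter (fun v => ¬ a ∈ N v))
    rw [← e1, Finset.card_insert_of_notMem ha]
    rw [← e2] at h1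
    set A := ∑ v ∈ T.filter (fun v => a ∈ N v), (1 - p) ^ (N v ∩ S).card
    set B := ∑ v ∈ T.filter (fun v => ¬ a ∈ N v), (1 - p) ^ (N v ∩ S).card
    push_cast
    by_cases hc : A ≤ 1
    · refine ⟨X1, hX1.trans (Finset.subset_insert _ _), h1.trans ?_⟩
      nlinarith
    · refine ⟨insert a X2, Finset.insert_subset_insert _ hX2, ?_⟩
      have haX : a ∉ X2 := fun h => ha (hX2 h)
      have hs : T.filter (fun v => N v ∩ insert a X2 = ∅) ⊆
          (T.filter (fun v => ¬ a ∈ N v)).filter (fun v => N v ∩ X2 = ∅) := by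
        intro v hv
        simp only [Finset.mem_filter] at hv ⊢
        by_cases h : a ∈ N v
        · rw [Finset.inter_insert_of_mem h] at hv
          simp at hv
        · rw [Finset.inter_insert_of_notMem h] at hv
          exact ⟨⟨hv.1, h⟩, hv.2⟩
      have hs' : ((T.filter (fun v => N v ∩ insert a X2 = ∅)).card : ℝ) ≤
          ((T.filter (fun v => ¬ a ∈ N v)).filter (fun v => N v ∩ X2 = ∅)).card := by
        exact_mod_cast Finset.card_le_card hs
      rw [Finset.card_insert_of_notMem haX]
      push_cast
      nlinarith

theorem total_domination_bound
    {V : Type*} [Fintype V] [DecidableEq V]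
    (G : SimpleGraph V) [DecidableRel G.Adj]
    (n : ℕ) (hn : n = Fintype.card V)
    (δ : ℕ) (hδ : δ = G.minDegree)
    (hδ1 : 1 ≤ δ) :
    (totalKDomNum G 1 : ℝ) ≤ ((Real.log δ + 1) / δ) * n := by
  have hd1 : (1 : ℝ) ≤ δ := by exact_mod_cast hδ1
  have hd0 : (0 : ℝ) < δ := by linarith
  have hdeg : ∀ v, δ ≤ (G.neighborFinset v).card := by
    intro v
    rw [hδ, SimpleGraph.card_neighborFinset_eq_degree]
    exact G.minDegree_le_degree v
  have hne : ∀ v, ∃ u, u ∈ G.neighborFinset v := fun v =>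
    Finset.card_pos.mp (lt_of_lt_of_le hδ1 (hdeg v))
  choose f hf using hne
  set p : ℝ := Real.log δ / δ with hp
  have hp0 : 0 ≤ p := div_nonneg (Real.log_nonneg hd1) hd0.le
  have hp1 : p ≤ 1 := by
    rw [hp, div_le_one hd0]
    linarith [Real.log_le_sub_one_of_pos hd0]
  obtain ⟨X, -, hX⟩ := exists_good_set (fun v => G.neighborFinset v) p hp0 hp1
    Finset.univ Finset.univ
  set U := Finset.univ.filter (fun v => G.neighborFinset v ∩ X = ∅) with hU
  have hpow : (1 - p) ^ δ ≤ 1 / (δ : ℝ) := by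
    calc (1 - p) ^ δ ≤ (Real.exp (-p)) ^ δ :=
          pow_le_pow_left₀ (by linarith) (Real.one_sub_le_exp_neg p) _
      _ = 1 / (δ : ℝ) := by
          rw [← Real.exp_nat_mul, hp, mul_neg, mul_div_cancel₀ _ hd0.ne', Real.exp_neg,
            Real.exp_log hd0, one_div]
  have hsum : ∑ v : V, (1 - p) ^ (G.neighborFinset v ∩ Finset.univ).card ≤ n * (1 / (δ : ℝ)) := by
    calc _ ≤ ∑ v : V, (1 / (δ : ℝ)) := by
          refine Finset.sum_le_sum fun v _ => ?_
          rw [Finset.inter_univ]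
          exact (pow_le_pow_of_le_one (by linarith) (by linarith) (hdeg v)).trans hpow
      _ = _ := by rw [Finset.sum_const, Finset.card_univ, ← hn, nsmul_eq_mul]
  have hle : totalKDomNum G 1 ≤ (X ∪ U.image f).card := by
    refine Nat.sInf_le ⟨X ∪ U.image f, fun v => ?_, rfl⟩
    refine Finset.card_pos.mpr ?_
    by_cases hv : G.neighborFinset v ∩ X = ∅
    · exact ⟨f v, Finset.mem_inter.mpr ⟨hf v, Finset.mem_union_right _
        (Finset.mem_image_of_mem f (by simp only [hU, Finset.mem_filter]; exact ⟨Finset.mem_univ _, hv⟩))⟩⟩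
    · obtain ⟨u, hu⟩ := Finset.nonempty_iff_ne_empty.mpr hv
      rw [Finset.mem_inter] at hu
      exact ⟨u, Finset.mem_inter.mpr ⟨hu.1, Finset.mem_union_left _ hu.2⟩⟩
  have hle2 : totalKDomNum G 1 ≤ X.card + U.card :=
    hle.trans ((Finset.card_union_le _ _).trans (Nat.add_le_add_left Finset.card_image_le _))
  have hle3 : (totalKDomNum G 1 : ℝ) ≤ X.card + U.card := by exact_mod_cast hle2
  rw [Finset.card_univ, ← hn] at hX
  have : ((Real.log δ + 1) / δ) * n = p * n + n * (1 / (δ : ℝ)) := by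
    rw [hp]; ring
  rw [this]
  linarith
end

section
/- For any finite simple graph G of order n with minimum degree δ ≥ k, where k ≥ 1 is an integer, writing δ̂ = δ − k + 1 and b̃_{k−1} = C(δ+1, k−1), the k-tuple domination number satisfies both γ_{×k}(G) ≤ (1 − δ̂ / ((1+δ̂)^{1+1/δ̂} · b̃_{k−1}^{1/δ̂})) · n and γ_{×k}(G) ≤ ((ln(δ − k + 2) + ln b̃_{k−1} + 1)/(δ − k + 2)) · n. -/
open Finset Real

/-- The k-tuple domination number: the minimum cardinality of a set X such that every
vertex has at least k members of X in its closed neighbourhood. -/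
noncomputable def kTupleDomNum {V : Type*} [Fintype V] [DecidableEq V]
    (G : SimpleGraph V) [DecidableRel G.Adj] (k : ℕ) : ℕ :=
  sInf {m : ℕ | ∃ X : Finset V,
    (∀ v, k ≤ ((insert v (G.neighborFinset v)) ∩ X).card) ∧ m = X.card}

/-- The probability that a random set avoids `U`. -/
lemma ktd_avoid {V : Type*} [Fintype V] [DecidableEq V] (p q : ℝ) (hpq : p + q = 1)
    (U : Finset V) :
    ∑ A : Finset V, p ^ #A * q ^ (Fintype.card V - #A) * (if Disjoint A U then (1 : ℝ) else 0)
      = q ^ #U := by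
  have h1 : (univ : Finset (Finset V)).filter (fun A => Disjoint A U) = (Uᶜ).powerset := by
    ext A
    simp [Finset.subset_compl_iff_disjoint_right]
  simp only [mul_ite, mul_one, mul_zero]
  rw [← Finset.sum_filter, h1]
  have h2 : ∀ A ∈ (Uᶜ).powerset, p ^ #A * q ^ (Fintype.card V - #A)
      = q ^ #U * (p ^ #A * q ^ (#(Uᶜ) - #A)) := by
    intro A hA
    have h3 := Finset.card_le_card (Finset.mem_powerset.1 hA)
    have h4 := Finset.card_add_card_compl U
    have h5 : Fintype.card V - #A = #U + (#(Uᶜ) - #A) := by omega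
    rw [h5, pow_add]; ring
  rw [Finset.sum_congr rfl h2, ← Finset.mul_sum, Finset.sum_pow_mul_eq_add_pow, hpq]
  simp

/-- Counting the `(k-1)`-sets covering `A ∩ S`. -/
lemma ktd_count {V : Type*} [DecidableEq V] (S A : Finset V) (k : ℕ) (hk : 1 ≤ k)
    (hS : k ≤ #S) :
    k - #(S ∩ A) ≤ #((S.powersetCard (k - 1)).filter (fun T => Disjoint A (S \ T))) := by
  by_cases hm : k ≤ #(S ∩ A)
  · omega
  push Not at hm
  have hcard : #(S \ A) + #(S ∩ A) = #S := Finset.card_sdiff_add_card_inter S A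
  have h1 : #((S \ A).powersetCard (k - 1 - #(S ∩ A)))
      ≤ #((S.powersetCard (k - 1)).filter (fun T => Disjoint A (S \ T))) := by
    apply Finset.card_le_card_of_injOn (fun T => T ∪ (S ∩ A))
    · intro T hT
      have hT' := Finset.mem_powersetCard.1 (Finset.mem_coe.1 hT)
      have hd : Disjoint T (S ∩ A) := by
        rw [Finset.disjoint_left]
        intro x hx hx'
        have := hT'.1 hx
        simp at this hx'
        tauto
      simp only [Finset.coe_filter, Set.mem_ofPred_eq, Finset.mem_powersetCard]
      refine ⟨⟨?_, ?_⟩, ?_⟩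
      · exact Finset.union_subset (hT'.1.trans Finset.sdiff_subset) Finset.inter_subset_left
      · rw [Finset.card_union_of_disjoint hd, hT'.2]; omega
      · rw [Finset.disjoint_left]
        intro x hx hx'
        simp at hx'
        tauto
    · intro T hT T' hT' h
      have hT1 := (Finset.mem_powersetCard.1 (Finset.mem_coe.1 hT)).1
      have hT2 := (Finset.mem_powersetCard.1 (Finset.mem_coe.1 hT')).1
      simp only at h
      ext x
      have h3 := Finset.ext_iff.1 h x
      have h4 := @hT1 x
      have h5 := @hT2 x
      simp at h3 h4 h5
      tauto
  refine le_trans ?_ h1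
  rw [Finset.card_powersetCard]
  have h2 := Nat.choose_le_choose (k - 1 - #(S ∩ A))
    (show (k - 1 - #(S ∩ A)) + 1 ≤ #(S \ A) by omega)
  rw [Nat.choose_succ_self_right] at h2
  omega

/-- The alteration step. -/
lemma ktd_alter {V : Type*} [Fintype V] [DecidableEq V]
    (G : SimpleGraph V) [DecidableRel G.Adj] (k : ℕ) (S : V → Finset V)
    (hS : ∀ v, S v ⊆ insert v (G.neighborFinset v)) (hc : ∀ v, k ≤ #(S v)) (A : Finset V) :
    kTupleDomNum G k ≤ #A + ∑ v, (k - #(S v ∩ A)) := by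
  have h1 : ∀ v, ∃ R ⊆ S v \ A, #R = k - #(S v ∩ A) := by
    intro v
    apply Finset.exists_subset_card_eq
    have := Finset.card_sdiff_add_card_inter (S v) A
    have := hc v
    omega
  choose R hR hRc using h1
  have h2 : kTupleDomNum G k ≤ #(A ∪ univ.biUnion R) := by
    apply Nat.sInf_le
    refine ⟨_, ?_, rfl⟩
    intro v
    have hd : Disjoint (S v ∩ A) (R v) := by
      rw [Finset.disjoint_left]
      intro x hx hx'
      have := hR v hx'
      simp at this hx
      tauto
    have h3 : (S v ∩ A) ∪ R v ⊆ insert v (G.neighborFinset v) ∩ (A ∪ univ.biUnion R) := by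
      apply Finset.union_subset
      · exact Finset.inter_subset_inter (hS v) Finset.subset_union_left
      · apply Finset.subset_inter
        · exact ((hR v).trans Finset.sdiff_subset).trans (hS v)
        · exact (Finset.subset_biUnion_of_mem R (Finset.mem_univ v)).trans
            Finset.subset_union_right
    have h4 := Finset.card_le_card h3
    rw [Finset.card_union_of_disjoint hd, hRc] at h4
    omega
  refine h2.trans ((Finset.card_union_le _ _).trans ?_)
  have := Finset.card_biUnion_le (s := (univ : Finset V)) (t := R)
  simp only [hRc] at this
  omega

lemma ktd_main {V : Type*} [Fintype V] [DecidableEq V]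
    (G : SimpleGraph V) [DecidableRel G.Adj] (k : ℕ) (hk : 1 ≤ k) (hkδ : k ≤ G.minDegree)
    (q : ℝ) (hq0 : 0 ≤ q) (hq1 : q ≤ 1) :
    (kTupleDomNum G k : ℝ) ≤ (1 - q + ((G.minDegree + 1).choose (k - 1) : ℕ) *
      q ^ (G.minDegree - k + 2)) * Fintype.card V := by
  have h1 : ∀ v, ∃ S ⊆ insert v (G.neighborFinset v), #S = G.minDegree + 1 := by
    intro v
    apply Finset.exists_subset_card_eq
    rw [Finset.card_insert_of_notMem (by simp), G.card_neighborFinset_eq_degree]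
    have := G.minDegree_le_degree v
    omega
  choose S hS hSc using h1
  set p := 1 - q with hp
  have hpq : p + q = 1 := by rw [hp]; ring
  set w : Finset V → ℝ := fun A => p ^ #A * q ^ (Fintype.card V - #A) with hw
  have hw0 : ∀ A, 0 ≤ w A := fun A =>
    mul_nonneg (pow_nonneg (by rw [hp]; linarith) _) (pow_nonneg hq0 _)
  have hav : ∀ U : Finset V, ∑ A, w A * (if Disjoint A U then (1 : ℝ) else 0) = q ^ #U :=
    fun U => ktd_avoid p q hpq U
  have hw1 : ∑ A, w A = 1 := by
    have := hav ∅
    simpa using this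
  have hA : ∀ A : Finset V, (kTupleDomNum G k : ℝ) ≤
      ∑ v, (1 - (if Disjoint A {v} then (1 : ℝ) else 0)) +
      ∑ v, ∑ T ∈ (S v).powersetCard (k - 1), (if Disjoint A (S v \ T) then (1 : ℝ) else 0) := by
    intro A
    have h2 := ktd_alter G k S hS (fun v => by rw [hSc]; omega) A
    have h3 : ∑ v, (k - #(S v ∩ A)) ≤
        ∑ v, #(((S v).powersetCard (k - 1)).filter (fun T => Disjoint A (S v \ T))) :=
      Finset.sum_le_sum fun v _ => ktd_count (S v) A k hk (by rw [hSc]; omega)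
    have h4 : ((#A : ℕ) : ℝ) = ∑ v, (1 - (if Disjoint A {v} then (1 : ℝ) else 0)) := by
      have : ∀ v, (1 - (if Disjoint A {v} then (1 : ℝ) else 0)) = if v ∈ A then 1 else 0 := by
        intro v
        by_cases h : v ∈ A <;> simp [h]
      rw [Finset.sum_congr rfl (fun v _ => this v)]
      simp
    have h5 : (kTupleDomNum G k : ℝ) ≤ (#A : ℕ) + ((∑ v,
        #(((S v).powersetCard (k - 1)).filter (fun T => Disjoint A (S v \ T))) : ℕ) : ℝ) := by
      exact_mod_cast h2.trans (by omega)
    rw [h4] at h5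
    refine h5.trans (le_of_eq ?_)
    push_cast
    simp
  have hfin : (kTupleDomNum G k : ℝ) ≤ ∑ A, w A *
      (∑ v, (1 - (if Disjoint A {v} then (1 : ℝ) else 0)) +
      ∑ v, ∑ T ∈ (S v).powersetCard (k - 1),
        (if Disjoint A (S v \ T) then (1 : ℝ) else 0)) := by
    calc (kTupleDomNum G k : ℝ) = ∑ A, w A * (kTupleDomNum G k : ℝ) := by
          rw [← Finset.sum_mul, hw1, one_mul]
      _ ≤ _ := Finset.sum_le_sum fun A _ => mul_le_mul_of_nonneg_left (hA A) (hw0 A)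
  refine hfin.trans (le_of_eq ?_)
  simp only [mul_add, Finset.mul_sum, Finset.sum_add_distrib]
  rw [Finset.sum_comm, Finset.sum_comm (γ := Finset V)]
  have e1 : ∀ v : V, ∑ A, w A * (1 - (if Disjoint A {v} then (1 : ℝ) else 0)) = 1 - q := by
    intro v
    simp only [mul_sub, mul_one, Finset.sum_sub_distrib]
    rw [hw1, hav]; simp
  have e2 : ∀ v : V, ∑ A, ∑ T ∈ (S v).powersetCard (k - 1),
      w A * (if Disjoint A (S v \ T) then (1 : ℝ) else 0) =
      ((G.minDegree + 1).choose (k - 1) : ℕ) * q ^ (G.minDegree - k + 2) := by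
    intro v
    rw [Finset.sum_comm]
    have : ∀ T ∈ (S v).powersetCard (k - 1),
        ∑ A, w A * (if Disjoint A (S v \ T) then (1 : ℝ) else 0)
          = q ^ (G.minDegree - k + 2) := by
      intro T hT
      have hT' := Finset.mem_powersetCard.1 hT
      rw [hav, Finset.card_sdiff_of_subset hT'.1, hSc, hT'.2]
      congr 1
      omega
    rw [Finset.sum_congr rfl this, Finset.sum_const, Finset.card_powersetCard, hSc,
      nsmul_eq_mul]
  simp only [e1, e2, Finset.sum_const, Finset.card_univ, nsmul_eq_mul]
  ring

theorem k_tuple_domination_bounds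
    {V : Type*} [Fintype V] [DecidableEq V]
    (G : SimpleGraph V) [DecidableRel G.Adj]
    (n : ℕ) (hn : n = Fintype.card V)
    (δ : ℕ) (hδ : δ = G.minDegree)
    (k : ℕ) (hk : 1 ≤ k) (hkδ : k ≤ δ)
    (dh : ℝ) (hdh : dh = (δ : ℝ) - k + 1)
    (b : ℝ) (hb : b = ((δ + 1).choose (k - 1) : ℕ)) :
    (kTupleDomNum G k : ℝ) ≤ (1 - dh / ((1 + dh) ^ (1 + 1 / dh) * b ^ (1 / dh))) * n ∧
    (kTupleDomNum G k : ℝ) ≤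
      ((Real.log ((δ : ℝ) - k + 2) + Real.log b + 1) / ((δ : ℝ) - k + 2)) * n := by
  have key := ktd_main G k hk (hδ ▸ hkδ)
  rw [← hδ, ← hn, ← hb] at key
  obtain ⟨d, hd⟩ : ∃ d : ℕ, δ = k + d := ⟨δ - k, by omega⟩
  have hdh' : dh = (d : ℝ) + 1 := by rw [hdh, hd]; push_cast; ring
  have he : δ - k + 2 = (d + 1) + 1 := by omega
  have hD : (δ : ℝ) - k + 2 = dh + 1 := by rw [hdh]; ring
  have hdpos : 0 < dh := by rw [hdh']; positivity
  have hb1 : 1 ≤ b := by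
    rw [hb]; exact_mod_cast Nat.choose_pos (by omega)
  have hb0 : 0 < b := by linarith
  have hn0 : (0 : ℝ) ≤ n := Nat.cast_nonneg n
  rw [he] at key
  constructor
  · have hB : 1 ≤ (1 + dh) * b := by nlinarith
    set q : ℝ := ((1 + dh) * b) ^ (-(1 / dh)) with hq
    have hq0 : 0 < q := Real.rpow_pos_of_pos (by linarith) _
    have hq1 : q ≤ 1 := Real.rpow_le_one_of_one_le_of_nonpos hB (by
      rw [neg_nonpos]; positivity)
    have hqd : q ^ (d + 1) = ((1 + dh) * b)⁻¹ := by
      rw [← Real.rpow_natCast, hq, ← Real.rpow_mul (by linarith)]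
      push_cast
      rw [← hdh', show -(1 / dh) * dh = -1 by field_simp, Real.rpow_neg_one]
    refine (key q hq0.le hq1).trans (le_of_eq ?_)
    congr 1
    have h1 : (1 + dh) ^ (1 + 1 / dh) * b ^ (1 / dh) = (1 + dh) * q⁻¹ := by
      rw [hq, Real.rpow_neg (by linarith), inv_inv, Real.mul_rpow (by linarith) hb0.le,
        Real.rpow_add (by linarith), Real.rpow_one]
      ring
    rw [h1, pow_succ, hqd]
    field_simp
    ring
  · rw [hD]
    set p : ℝ := (Real.log (dh + 1) + Real.log b) / (dh + 1) with hp
    have hp0 : 0 ≤ p := div_nonneg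
      (add_nonneg (Real.log_nonneg (by linarith)) (Real.log_nonneg hb1)) (by linarith)
    have hgoal : (Real.log (dh + 1) + Real.log b + 1) / (dh + 1) = p + 1 / (dh + 1) := by
      rw [hp]; ring
    rw [hgoal]
    have hpos : 0 < 1 / (dh + 1) := by positivity
    by_cases hp1 : p ≤ 1
    · refine (key (1 - p) (by linarith) (by linarith)).trans ?_
      apply mul_le_mul_of_nonneg_right _ hn0
      have h1 : (1 - p) ^ (d + 1 + 1) ≤ Real.exp (-p) ^ (d + 1 + 1) :=
        pow_le_pow_left₀ (by linarith) (Real.one_sub_le_exp_neg p) _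
      have h2 : Real.exp (-p) ^ (d + 1 + 1) = ((dh + 1) * b)⁻¹ := by
        rw [← Real.exp_nat_mul]
        push_cast
        rw [← hdh', show (dh + 1) * -p = -(Real.log (dh + 1) + Real.log b) by
          rw [hp]; field_simp, ← Real.log_mul (by linarith) (by linarith), Real.exp_neg,
          Real.exp_log (by positivity)]
      rw [h2] at h1
      have h3 := mul_le_mul_of_nonneg_left h1 hb0.le
      have h4 : b * ((dh + 1) * b)⁻¹ = 1 / (dh + 1) := by field_simp
      linarith
    · push Not at hp1
      have h0 := key 0 le_rfl zero_le_one
      rw [zero_pow (by omega)] at h0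
      nlinarith
end
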